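/- arXiv:math/0410102 — 3 statements merged into one kernel-verified Lean document; each statement's English description precedes it below -/
import Mathlib

section
/- Let L : (0,∞) → (0,∞) be a nondecreasing function satisfying L(cy) ≤ 3cL(y) for all c ≥ 1 and y > 0, L(y²) ≤ 3L(y) for all y ≥ 1, and ∫₁^∞ dx/(x·L(x)) = 1/2. Define g(x) = (exp(x²/2)/x)·1_{x ≥ 1}. Let h be a nondecreasing function on [0,∞) such that for some x₀ ≥ 1 and c > 0, 0 < h(x) ≤ c·g(x)/L(x) for all x ≥ x₀. Let q be a strictly increasing continuous function on [0,∞) such that for some c̄ ≥ c, L(x) ≤ q(x) ≤ c̄·g(x)/h(x) for all x ≥ x₀. Let A and B be real random variables on a probability space with B > 0 almost surely, satisfying E[exp(λA − λ²B²/2)] ≤ 1 for all λ > 0. Then E[ h(A⁺/B) ] ≤ 4c̄ + h(x₀) + E[ h( q⁻¹( L(B ∨ B⁻¹) ) ) ], where A⁺ = max(A,0) and q⁻¹ is the inverse function of q. In particular, E[h(A⁺/B)] < ∞ whenever E[h(q⁻¹(L(B ∨ B⁻¹)))] < ∞. -/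
open MeasureTheory

/-- The mixing density. -/
noncomputable def mixF (L : ℝ → ℝ) (l : ℝ) : ℝ := (l * L (max (max l l⁻¹) 1))⁻¹

lemma mixF_meas (L : ℝ → ℝ) (hLmono : ∀ x y : ℝ, 0 < x → x ≤ y → L x ≤ L y) :
    Measurable (mixF L) := by
  have h1 : Monotone (fun x : ℝ => L (max x 1)) := by
    intro x y hxy
    exact hLmono _ _ (lt_of_lt_of_le one_pos (le_max_right _ _)) (max_le_max_right _ hxy)
  have h2 : Measurable (fun l : ℝ => L (max (max l l⁻¹) 1)) :=
    h1.measurable.comp (measurable_id.max measurable_inv)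
  exact (measurable_id.mul h2).inv

lemma mixF_int (L : ℝ → ℝ) (hLpos : ∀ x > (0 : ℝ), 0 < L x)
    (h33 : ∫ x in Set.Ioi (1 : ℝ), (x * L x)⁻¹ = 1 / 2) :
    ∫⁻ l in Set.Ioi (0 : ℝ), ENNReal.ofReal (mixF L l) ≤ 1 := by
  have hint : IntegrableOn (fun x => (x * L x)⁻¹) (Set.Ioi 1) := by
    by_contra hn
    rw [integral_undef hn] at h33
    norm_num at h33
  have hA : ∫⁻ x in Set.Ioi (1 : ℝ), ENNReal.ofReal ((x * L x)⁻¹) = ENNReal.ofReal (1 / 2) := by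
    rw [← h33, ofReal_integral_eq_lintegral_ofReal hint]
    filter_upwards [ae_restrict_mem measurableSet_Ioi] with x hx
    have hx' : (1 : ℝ) < x := hx
    have := hLpos x (by linarith)
    have h0 : 0 < x := by linarith
    show 0 ≤ (x * L x)⁻¹
    positivity
  have h1 : ∫⁻ l in Set.Ioi (1 : ℝ), ENNReal.ofReal (mixF L l) = ENNReal.ofReal (1 / 2) := by
    rw [← hA]
    refine setLIntegral_congr_fun measurableSet_Ioi ?_
    intro x hx
    have hx' : (1 : ℝ) < x := hx
    have : x⁻¹ ≤ 1 := inv_le_one_of_one_le₀ hx'.le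
    simp only [mixF]
    rw [max_eq_left (by linarith : x⁻¹ ≤ x), max_eq_left hx'.le]
  have himg : (fun x : ℝ => x⁻¹) '' Set.Ioi 1 = Set.Ioo 0 1 := by
    ext z
    constructor
    · rintro ⟨x, hx, rfl⟩
      have hx' : (1 : ℝ) < x := hx
      exact ⟨inv_pos.2 (by linarith), inv_lt_one_of_one_lt₀ hx'⟩
    · rintro ⟨hz0, hz1⟩
      exact ⟨z⁻¹, (one_lt_inv₀ hz0).2 hz1, inv_inv z⟩
  have h2 : ∫⁻ l in Set.Ioo (0 : ℝ) 1, ENNReal.ofReal (mixF L l) = ENNReal.ofReal (1 / 2) := by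
    rw [← himg, lintegral_image_eq_lintegral_abs_deriv_mul (f' := fun x => -(x ^ 2)⁻¹)
      measurableSet_Ioi, ← hA]
    · refine setLIntegral_congr_fun measurableSet_Ioi ?_
      intro x hx
      have hx' : (1 : ℝ) < x := hx
      have h0 : 0 < x := by linarith
      have : x⁻¹ ≤ 1 := inv_le_one_of_one_le₀ hx'.le
      simp only [mixF, inv_inv]
      rw [max_eq_right (by linarith : x⁻¹ ≤ x), max_eq_left hx'.le, abs_neg,
        abs_of_pos (by positivity), ← ENNReal.ofReal_mul (by positivity)]
      congr 1
      have := hLpos x h0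
      field_simp
    · intro x hx
      have hx' : (1 : ℝ) < x := hx
      exact (hasDerivAt_inv (by linarith)).hasDerivWithinAt
    · exact inv_injective.injOn
  have hU : Set.Ioi (0 : ℝ) = Set.Ioc 0 1 ∪ Set.Ioi 1 := (Set.Ioc_union_Ioi_eq_Ioi zero_le_one).symm
  rw [hU]
  refine (lintegral_union_le _ _ _).trans ?_
  rw [h1, ← setLIntegral_congr Ioo_ae_eq_Ioc, h2, ← ENNReal.ofReal_add (by norm_num) (by norm_num)]
  norm_num

lemma L_bound (L : ℝ → ℝ) (hLpos : ∀ x > (0 : ℝ), 0 < L x)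
    (hLmono : ∀ x y : ℝ, 0 < x → x ≤ y → L x ≤ L y)
    (h31 : ∀ c' ≥ (1 : ℝ), ∀ y > (0 : ℝ), L (c' * y) ≤ 3 * c' * L y)
    (h32 : ∀ y ≥ (1 : ℝ), L (y ^ 2) ≤ 3 * L y)
    (y B x : ℝ) (hy : 1 ≤ y) (hB : 0 < B) (hx : 0 < x) (hxy : x ≤ y) :
    x * L (max (max (x / B) (x / B)⁻¹) 1) ≤ 3 * y * max (L y) (L (max B B⁻¹)) := by
  set b := max B B⁻¹ with hb
  set M := max (L y) (L b) with hM
  have hbB : B ≤ b := le_max_left _ _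
  have hbB' : B⁻¹ ≤ b := le_max_right _ _
  have hb1 : 1 ≤ b := by
    rcases le_total 1 B with h | h
    · exact h.trans hbB
    · exact ((one_le_inv₀ hB).2 h).trans hbB'
  have hMy : L y ≤ M := le_max_left _ _
  have hMb : L b ≤ M := le_max_right _ _
  have hM0 : 0 < M := (hLpos y (by linarith)).trans_le hMy
  have hyb : L (y * b) ≤ 3 * M := by
    have hz : 1 ≤ max y b := hy.trans (le_max_left _ _)
    have e1 : L (y * b) ≤ L ((max y b) ^ 2) := by
      apply hLmono _ _ (by positivity)
      rw [sq]
      exact mul_le_mul (le_max_left _ _) (le_max_right _ _) (by linarith) (by linarith)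
    have e2 := h32 _ hz
    have e3 : L (max y b) ≤ M := by
      rcases max_choice y b with h | h <;> rw [h] <;> assumption
    linarith
  have hinv : (x / B)⁻¹ = x⁻¹ * B := by field_simp
  have hdiv : x / B = x * B⁻¹ := div_eq_mul_inv _ _
  have hBi : 0 < B⁻¹ := inv_pos.2 hB
  rcases le_total 1 x with h | h
  · have e1 : max (max (x / B) (x / B)⁻¹) 1 ≤ y * b := by
      refine max_le (max_le ?_ ?_) (by nlinarith)
      · rw [hdiv]; exact mul_le_mul hxy hbB' hBi.le (by linarith)
      · rw [hinv]
        exact mul_le_mul ((inv_le_one_of_one_le₀ h).trans hy) hbB hB.le (by linarith)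
    have e2 := hLmono _ _ (lt_of_lt_of_le one_pos (le_max_right _ _)) e1
    calc _ ≤ y * (3 * M) := by
          refine mul_le_mul hxy (e2.trans hyb) ?_ (by linarith)
          exact (hLpos _ (lt_of_lt_of_le one_pos (le_max_right _ _))).le
      _ = _ := by ring
  · have hxi : 1 ≤ x⁻¹ := (one_le_inv₀ hx).2 h
    have e1 : max (max (x / B) (x / B)⁻¹) 1 ≤ x⁻¹ * b := by
      refine max_le (max_le ?_ ?_) (by nlinarith)
      · rw [hdiv]; exact mul_le_mul (h.trans hxi) hbB' hBi.le (by linarith)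
      · rw [hinv]
        exact mul_le_mul le_rfl hbB hB.le (by linarith)
    have e2 := hLmono _ _ (lt_of_lt_of_le one_pos (le_max_right _ _)) e1
    have e3 := h31 x⁻¹ hxi b (by linarith)
    calc _ ≤ x * (3 * x⁻¹ * L b) := mul_le_mul_of_nonneg_left (e2.trans e3) hx.le
      _ = 3 * L b := by field_simp
      _ ≤ 3 * y * M := by nlinarith

lemma key_bound (L : ℝ → ℝ) (hLpos : ∀ x > (0 : ℝ), 0 < L x)
    (hLmono : ∀ x y : ℝ, 0 < x → x ≤ y → L x ≤ L y)
    (h31 : ∀ c' ≥ (1 : ℝ), ∀ y > (0 : ℝ), L (c' * y) ≤ 3 * c' * L y)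
    (h32 : ∀ y ≥ (1 : ℝ), L (y ^ 2) ≤ 3 * L y)
    (y B : ℝ) (hy : 1 ≤ y) (hB : 0 < B) :
    ENNReal.ofReal (Real.exp (y ^ 2 / 2) / y / (4 * max (L y) (L (max B B⁻¹)))) ≤
    ∫⁻ l in Set.Ioi (0 : ℝ), ENNReal.ofReal (mixF L l) *
      ENNReal.ofReal (Real.exp (l * (y * B) - l ^ 2 * B ^ 2 / 2)) := by
  set M := max (L y) (L (max B B⁻¹)) with hM
  have hM0 : 0 < M := (hLpos y (by linarith)).trans_le (le_max_left _ _)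
  have hy0 : 0 < y := by linarith
  set K := Real.exp (y ^ 2 / 2) / y / (3 * M) with hK
  have hK0 : 0 < K := by positivity
  have hab : (y - 1) / B ≤ y / B := by gcongr; linarith
  have hI : ∫ l in ((y - 1) / B)..(y / B), K * B * (1 - (l * B - y) ^ 2 / 2) = K * (5 / 6) := by
    rw [intervalIntegral.integral_eq_sub_of_hasDerivAt
      (f := fun l => K * ((l * B - y) - (l * B - y) ^ 3 / 6))]
    · field_simp
      ring
    · intro l _
      have e : HasDerivAt (fun l : ℝ => l * B - y) B l := by
        simpa using ((hasDerivAt_id l).mul_const B).sub_const y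
      have := (e.sub ((e.pow 3).div_const 6)).const_mul K
      refine this.congr_deriv ?_
      simp
      ring
    · exact Continuous.intervalIntegrable (by fun_prop) _ _
  have hpt : ∀ l ∈ Set.Ioc ((y - 1) / B) (y / B), 0 ≤ K * B * (1 - (l * B - y) ^ 2 / 2) ∧
      K * B * (1 - (l * B - y) ^ 2 / 2) ≤
        mixF L l * Real.exp (l * (y * B) - l ^ 2 * B ^ 2 / 2) := by
    rintro l ⟨hl1, hl2⟩
    rw [div_lt_iff₀ hB] at hl1
    rw [le_div_iff₀ hB] at hl2
    have hl0 : 0 < l := by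
      by_contra hn
      push Not at hn
      nlinarith
    have hp : 0 ≤ 1 - (l * B - y) ^ 2 / 2 := by nlinarith
    refine ⟨by positivity, ?_⟩
    have hb := L_bound L hLpos hLmono h31 h32 y B (l * B) hy hB (by positivity) hl2
    rw [mul_div_cancel_right₀ _ hB.ne', ← hM] at hb
    have hLp : 0 < L (max (max l l⁻¹) 1) := hLpos _ (lt_of_lt_of_le one_pos (le_max_right _ _))
    have hf : B / (3 * y * M) ≤ mixF L l := by
      rw [mixF, ← one_div, div_le_div_iff₀ (by positivity) (by positivity)]
      linarith
    have hexp : Real.exp (l * (y * B) - l ^ 2 * B ^ 2 / 2) =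
        Real.exp (y ^ 2 / 2) * Real.exp (-((l * B - y) ^ 2 / 2)) := by
      rw [← Real.exp_add]; congr 1; ring
    have he : 1 - (l * B - y) ^ 2 / 2 ≤ Real.exp (-((l * B - y) ^ 2 / 2)) := by
      have := Real.add_one_le_exp (-((l * B - y) ^ 2 / 2))
      linarith
    rw [hexp]
    calc K * B * (1 - (l * B - y) ^ 2 / 2) =
        (B / (3 * y * M)) * (Real.exp (y ^ 2 / 2) * (1 - (l * B - y) ^ 2 / 2)) := by
          rw [hK]; field_simp
      _ ≤ _ := by
          refine mul_le_mul hf (by gcongr) (by positivity) ?_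
          exact le_trans (by positivity) hf
  have hsub : Set.Ioc ((y - 1) / B) (y / B) ⊆ Set.Ioi 0 := by
    intro l hl
    exact lt_of_le_of_lt (div_nonneg (by linarith) hB.le) hl.1
  calc _ ≤ ENNReal.ofReal (K * (5 / 6)) := by
        apply ENNReal.ofReal_le_ofReal
        have : Real.exp (y ^ 2 / 2) / y / (4 * M) = K * (3 / 4) := by
          rw [hK]; field_simp
        rw [this]
        nlinarith
    _ = ∫⁻ l in Set.Ioc ((y - 1) / B) (y / B),
          ENNReal.ofReal (K * B * (1 - (l * B - y) ^ 2 / 2)) := by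
        rw [← hI, intervalIntegral.integral_of_le hab, ofReal_integral_eq_lintegral_ofReal]
        · exact (Continuous.integrableOn_Icc (by fun_prop)).mono_set Set.Ioc_subset_Icc_self
        · filter_upwards [ae_restrict_mem measurableSet_Ioc] with l hl using (hpt l hl).1
    _ ≤ ∫⁻ l in Set.Ioc ((y - 1) / B) (y / B), ENNReal.ofReal (mixF L l) *
          ENNReal.ofReal (Real.exp (l * (y * B) - l ^ 2 * B ^ 2 / 2)) := by
        refine setLIntegral_mono' measurableSet_Ioc ?_
        intro l hl
        rw [← ENNReal.ofReal_mul' (Real.exp_pos _).le]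
        exact ENNReal.ofReal_le_ofReal (hpt l hl).2
    _ ≤ _ := lintegral_mono_set hsub

lemma L_unbdd (L : ℝ → ℝ) (hLpos : ∀ x > (0 : ℝ), 0 < L x)
    (h33 : ∫ x in Set.Ioi (1 : ℝ), (x * L x)⁻¹ = 1 / 2) (C : ℝ) :
    ∃ x > 1, C < L x := by
  by_contra hn
  push Not at hn
  have hint : IntegrableOn (fun x => (x * L x)⁻¹) (Set.Ioi 1) := by
    by_contra hn
    rw [integral_undef hn] at h33
    norm_num at h33
  refine not_integrableOn_Ioi_inv (a := 1) ?_
  refine Integrable.mono' (hint.const_mul C) measurable_inv.aestronglyMeasurable ?_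
  filter_upwards [ae_restrict_mem measurableSet_Ioi] with x hx
  have hx' : (1 : ℝ) < x := hx
  have h0 : 0 < x := by linarith
  have h1 := hLpos x h0
  have h2 := hn x hx'
  rw [Real.norm_of_nonneg (by positivity)]
  have : x⁻¹ = L x * (x * L x)⁻¹ := by field_simp
  rw [this]
  gcongr

/-- Theorem 3.3. -/
theorem stmt_6 {Ω : Type*} {mΩ : MeasurableSpace Ω} {μ : Measure Ω}
    [IsProbabilityMeasure μ]
    (L : ℝ → ℝ)
    (hLpos : ∀ x > (0 : ℝ), 0 < L x)
    (hLmono : ∀ x y : ℝ, 0 < x → x ≤ y → L x ≤ L y)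
    (h31 : ∀ c' ≥ (1 : ℝ), ∀ y > (0 : ℝ), L (c' * y) ≤ 3 * c' * L y)
    (h32 : ∀ y ≥ (1 : ℝ), L (y ^ 2) ≤ 3 * L y)
    (h33 : ∫ x in Set.Ioi (1 : ℝ), (x * L x)⁻¹ = 1 / 2)
    (g : ℝ → ℝ) (hg : ∀ x, g x = if 1 ≤ x then Real.exp (x ^ 2 / 2) / x else 0)
    (h : ℝ → ℝ) (hh0 : ∀ x, 0 ≤ h x)
    (hhmono : ∀ x y : ℝ, 0 ≤ x → x ≤ y → h x ≤ h y)
    (x₀ c cbar : ℝ) (hx₀ : 1 ≤ x₀) (hc : 0 < c) (hcbar : c ≤ cbar)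
    (h39 : ∀ x ≥ x₀, 0 < h x ∧ h x ≤ c * g x / L x)
    (q : ℝ → ℝ) (hqmono : StrictMonoOn q (Set.Ici 0)) (hqcont : ContinuousOn q (Set.Ici 0))
    (h310 : ∀ x ≥ x₀, L x ≤ q x ∧ q x ≤ cbar * g x / h x)
    (qinv : ℝ → ℝ)
    (hqinv : ∀ x ∈ Set.Ici (0 : ℝ), qinv (q x) = x)
    (hqinv' : ∀ y ∈ q '' Set.Ici (0 : ℝ), q (qinv y) = y)
    (A B : Ω → ℝ) (hA : Measurable A) (hB : Measurable B)
    (hBpos : ∀ᵐ ω ∂μ, 0 < B ω)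
    (h14 : ∀ lam : ℝ, 0 < lam →
      ∫⁻ ω, ENNReal.ofReal (Real.exp (lam * A ω - lam ^ 2 * (B ω) ^ 2 / 2)) ∂μ ≤ 1) :
    (∫⁻ ω, ENNReal.ofReal (h (max (A ω) 0 / B ω)) ∂μ ≤
      ENNReal.ofReal (4 * cbar + h x₀) +
        ∫⁻ ω, ENNReal.ofReal (h (qinv (L (max (B ω) (B ω)⁻¹)))) ∂μ) ∧
    ((∫⁻ ω, ENNReal.ofReal (h (qinv (L (max (B ω) (B ω)⁻¹)))) ∂μ < ⊤) →
      ∫⁻ ω, ENNReal.ofReal (h (max (A ω) 0 / B ω)) ∂μ < ⊤) := by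
  have hcb : 0 < cbar := hc.trans_le hcbar
  set F : Ω → ENNReal := fun ω => ∫⁻ l in Set.Ioi (0 : ℝ), ENNReal.ofReal (mixF L l) *
      ENNReal.ofReal (Real.exp (l * A ω - l ^ 2 * (B ω) ^ 2 / 2)) with hF
  have hmeas2 : Measurable (fun p : Ω × ℝ => ENNReal.ofReal (mixF L p.2) *
      ENNReal.ofReal (Real.exp (p.2 * A p.1 - p.2 ^ 2 * (B p.1) ^ 2 / 2))) := by
    have := mixF_meas L hLmono
    fun_prop
  have hFm : Measurable F := hmeas2.lintegral_prod_right'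
  have hF1 : ∫⁻ ω, F ω ∂μ ≤ 1 := by
    rw [hF, lintegral_lintegral_swap hmeas2.aemeasurable]
    refine le_trans ?_ (mixF_int L hLpos h33)
    refine setLIntegral_mono' measurableSet_Ioi ?_
    intro l hl
    rw [lintegral_const_mul _ (by fun_prop)]
    calc _ ≤ ENNReal.ofReal (mixF L l) * 1 := by gcongr; exact h14 l hl
      _ = _ := mul_one _
  have hpt : ∀ᵐ ω ∂μ, ENNReal.ofReal (h (max (A ω) 0 / B ω)) ≤
      (ENNReal.ofReal (4 * cbar) * F ω + ENNReal.ofReal (h x₀)) +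
        ENNReal.ofReal (h (qinv (L (max (B ω) (B ω)⁻¹)))) := by
    filter_upwards [hBpos] with ω hBω
    set y := max (A ω) 0 / B ω with hy
    set b := max (B ω) (B ω)⁻¹ with hb
    have hy0 : 0 ≤ y := by positivity
    have hb0 : 0 < b := hBω.trans_le (le_max_left _ _)
    rcases lt_or_ge y x₀ with hlt | hge
    · refine le_trans (ENNReal.ofReal_le_ofReal (hhmono y x₀ hy0 hlt.le)) ?_
      exact le_trans le_add_self le_self_add
    rcases lt_or_ge (q y) (L b) with hq | hq
    · refine le_trans (ENNReal.ofReal_le_ofReal ?_) le_add_self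
      obtain ⟨z, hz1, hz⟩ := L_unbdd L hLpos h33 (L b)
      set w := max z (max x₀ y) with hw
      have hyw : y ≤ w := (le_max_right _ _).trans (le_max_right _ _)
      have hxw : x₀ ≤ w := (le_max_left _ _).trans (le_max_right _ _)
      have hqw : L b ≤ q w :=
        (hz.le.trans (hLmono z w (by linarith) (le_max_left _ _))).trans (h310 w hxw).1
      have hc' : ContinuousOn q (Set.Icc y w) := hqcont.mono fun t ht => hy0.trans ht.1
      obtain ⟨t, ht, hqt⟩ := intermediate_value_Icc hyw hc' ⟨hq.le, hqw⟩
      rw [← hqt, hqinv t (hy0.trans ht.1)]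
      exact hhmono y t hy0 ht.1
    · refine le_trans ?_ (le_trans le_self_add le_self_add)
      have hy1 : 1 ≤ y := hx₀.trans hge
      have hAB : y * B ω = A ω := by
        have hne : max (A ω) 0 = y * B ω := by rw [hy]; field_simp
        have : 0 < y * B ω := by positivity
        rcases max_choice (A ω) 0 with hm | hm
        · rw [← hne, hm]
        · rw [hm] at hne; linarith
      have hk := key_bound L hLpos hLmono h31 h32 y (B ω) hy1 hBω
      rw [hAB, ← hb] at hk
      obtain ⟨hLq, hqg⟩ := h310 y hge
      have hhp := (h39 y hge).1
      rw [hg, if_pos hy1, le_div_iff₀ hhp] at hqg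
      set M := max (L y) (L b) with hM
      have hM0 : 0 < M := (hLpos y (by linarith)).trans_le (le_max_left _ _)
      have hMq : M ≤ q y := max_le hLq hq
      calc ENNReal.ofReal (h y)
          ≤ ENNReal.ofReal (4 * cbar * (Real.exp (y ^ 2 / 2) / y / (4 * M))) := by
            apply ENNReal.ofReal_le_ofReal
            have : 4 * cbar * (Real.exp (y ^ 2 / 2) / y / (4 * M)) =
                cbar * (Real.exp (y ^ 2 / 2) / y) / M := by field_simp
            rw [this, le_div_iff₀ hM0]
            nlinarith
        _ = ENNReal.ofReal (4 * cbar) * ENNReal.ofReal (Real.exp (y ^ 2 / 2) / y / (4 * M)) :=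
            ENNReal.ofReal_mul (by positivity)
        _ ≤ _ := by gcongr
  have hmain : ∫⁻ ω, ENNReal.ofReal (h (max (A ω) 0 / B ω)) ∂μ ≤
      ENNReal.ofReal (4 * cbar + h x₀) +
        ∫⁻ ω, ENNReal.ofReal (h (qinv (L (max (B ω) (B ω)⁻¹)))) ∂μ := by
    refine (lintegral_mono_ae hpt).trans ?_
    rw [lintegral_add_left (by fun_prop), lintegral_add_left (by fun_prop),
      lintegral_const_mul _ hFm, lintegral_const, measure_univ, mul_one,
      ENNReal.ofReal_add (by positivity) (hh0 _)]
    gcongr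
    calc _ ≤ ENNReal.ofReal (4 * cbar) * 1 := by gcongr
      _ = _ := mul_one _
  exact ⟨hmain, fun hlt => hmain.trans_lt (ENNReal.add_lt_top.2 ⟨ENNReal.ofReal_lt_top, hlt⟩)⟩
end

section
/- Let 1 < r ≤ 2 and λ₀ > 0. Let (A_n)_{n≥0} and (B_n)_{n≥0} be stochastic processes adapted to a filtration (F_n)_{n≥0} such that A₀ = 0, B_n > 0 and B_n is nondecreasing in n for n ≥ 1, and such that for every 0 < λ < λ₀ the process ( exp( λA_n − (λB_n)^r/r ) )_{n ≥ 0} is a supermartingale with mean ≤ 1. Let L : [1,∞) → (0,∞) be a nondecreasing function satisfying L(cy) ≤ 3cL(y) for all c ≥ 1 and y ≥ 1, L(y²) ≤ 3L(y) for all y ≥ 1, and ∫₁^∞ dx/(x·L(x)) = 1/2. Let η > 0, 0 < ε < λ₀η, and let h : [0,∞) → [0,∞) be a nondecreasing function with h(x) ≤ e^{εx} for all sufficiently large x. Then there exists a constant C depending only on λ₀, η, r, ε, h and L such that E[ h( sup_{n ≥ 0} A_n·(B_n ∨ η)^{−1}·(1 ∨ log⁺ L(B_n ∨ η))^{−(r−1)/r}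 ) ] ≤ C. -/
open MeasureTheory

lemma aux_max {Ω : Type} {mΩ : MeasurableSpace Ω} (μ : Measure Ω) [IsProbabilityMeasure μ]
    (ℱ : Filtration ℕ mΩ) (M : ℕ → Ω → ℝ) (hM : Supermartingale M ℱ μ)
    (hpos : ∀ n ω, 0 ≤ M n ω) (h1 : ∫ ω, M 0 ω ∂μ ≤ 1) (c : ℝ) (hc : 0 < c) :
    MeasurableSet {ω | ∃ n, c ≤ M n ω} ∧
    μ {ω | ∃ n, c ≤ M n ω} ≤ ENNReal.ofReal (1 / c) := by
  have hmeas : ∀ n, MeasurableSet[ℱ n] {ω | c ≤ M n ω} := fun n =>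
    measurableSet_le measurable_const (hM.stronglyAdapted n).measurable
  set U : ℕ → Set Ω := fun n => {ω | ∃ j ≤ n, c ≤ M j ω} with hU
  have hUm : ∀ n, MeasurableSet[ℱ n] (U n) := by
    intro n
    have : U n = ⋃ j ∈ Set.Iic n, {ω | c ≤ M j ω} := by ext ω; simp [hU]
    rw [this]
    exact MeasurableSet.biUnion (Set.to_countable _) (fun j hj => ℱ.mono hj _ (hmeas j))
  have hUm' : ∀ n, MeasurableSet (U n) := fun n => ℱ.le n _ (hUm n)
  have hUs : ∀ n, U (n+1) = U n ∪ {ω | c ≤ M (n+1) ω} := by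
    intro n
    ext ω
    simp only [hU, Set.mem_ofPred_eq, Set.mem_union]
    constructor
    · rintro ⟨j, hj, h⟩
      rcases Nat.lt_or_ge n j with h' | h'
      · right; have : j = n + 1 := by omega
        rwa [this] at h
      · left; exact ⟨j, h', h⟩
    · rintro (⟨j, hj, h⟩ | h)
      · exact ⟨j, by omega, h⟩
      · exact ⟨n+1, le_rfl, h⟩
  have key : ∀ n, c * μ.real (U n) + ∫ ω in (U n)ᶜ, M n ω ∂μ ≤ 1 := by
    intro n
    induction n with
    | zero =>
      refine le_trans ?_ h1
      rw [← integral_add_compl (hUm' 0) (hM.integrable 0)]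
      gcongr
      apply setIntegral_ge_of_const_le_real (hUm' 0) (measure_ne_top _ _) _ (hM.integrable 0).integrableOn
      rintro ω ⟨j, hj, h⟩
      have : j = 0 := by omega
      rwa [this] at h
    | succ n ih =>
      refine le_trans ?_ ih
      have h2 : ∫ ω in (U n)ᶜ, M (n+1) ω ∂μ ≤ ∫ ω in (U n)ᶜ, M n ω ∂μ :=
        hM.setIntegral_le (Nat.le_succ n) (hUm n).compl
      have hV : MeasurableSet (U (n+1) \ U n) := (hUm' (n+1)).diff (hUm' n)
      have hsub : U n ⊆ U (n+1) := by rw [hUs]; exact Set.subset_union_left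
      have h3 : (U n)ᶜ = (U (n+1) \ U n) ∪ (U (n+1))ᶜ := by
        ext ω
        have := @hsub ω
        simp only [Set.mem_compl_iff, Set.mem_union, Set.mem_sdiff]
        tauto
      have h4 : ∫ ω in (U n)ᶜ, M (n+1) ω ∂μ = ∫ ω in (U (n+1) \ U n), M (n+1) ω ∂μ
          + ∫ ω in (U (n+1))ᶜ, M (n+1) ω ∂μ := by
        rw [h3]
        apply setIntegral_union _ (hUm' _).compl (hM.integrable _).integrableOn (hM.integrable _).integrableOn
        exact disjoint_compl_right.mono_left Set.sdiff_subset
      have h5 : c * μ.real (U (n+1) \ U n) ≤ ∫ ω in (U (n+1) \ U n), M (n+1) ω ∂μ := by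
        apply setIntegral_ge_of_const_le_real hV (measure_ne_top _ _) _ (hM.integrable _).integrableOn
        rintro ω ⟨h, h'⟩
        rw [hUs] at h
        rcases h with h | h
        · exact absurd h h'
        · exact h
      have h6 : μ.real (U (n+1)) = μ.real (U n) + μ.real (U (n+1) \ U n) := by
        rw [← measureReal_union Set.disjoint_sdiff_right hV, Set.union_sdiff_cancel hsub]
      rw [h6]
      linarith
  have hUn : {ω | ∃ n, c ≤ M n ω} = ⋃ n, U n := by
    ext ω
    simp only [hU, Set.mem_ofPred_eq, Set.mem_iUnion]
    exact ⟨fun ⟨n, h⟩ => ⟨n, n, le_rfl, h⟩, fun ⟨n, j, _, h⟩ => ⟨j, h⟩⟩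
  rw [hUn]
  refine ⟨MeasurableSet.iUnion hUm', ?_⟩
  have hmono : Monotone U := by
    apply monotone_nat_of_le_succ
    intro n; rw [hUs]; exact Set.subset_union_left
  rw [hmono.measure_iUnion]
  apply iSup_le
  intro n
  rw [ENNReal.le_ofReal_iff_toReal_le (measure_ne_top _ _) (by positivity), le_div_iff₀ hc]
  have h7 : 0 ≤ ∫ ω in (U n)ᶜ, M n ω ∂μ := integral_nonneg (fun ω => hpos n ω)
  have := key n
  have h8 : (μ (U n)).toReal = μ.real (U n) := rfl
  rw [h8]; linarith

lemma aux_sum (L : ℝ → ℝ) (hLpos : ∀ x ≥ (1 : ℝ), 0 < L x)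
    (hLmono : ∀ x y : ℝ, 1 ≤ x → x ≤ y → L x ≤ L y)
    (h33 : ∫ x in Set.Ioi (1 : ℝ), (x * L x)⁻¹ = 1 / 2) (K : ℝ) (hK : 1 ≤ K) :
    Summable (fun k : ℕ => (L (K * 2 ^ k))⁻¹) := by
  have hint : IntegrableOn (fun x => (x * L x)⁻¹) (Set.Ioi (1:ℝ)) := by
    by_contra hn
    rw [integral_undef hn] at h33
    norm_num at h33
  have ha1 : ∀ k : ℕ, 1 ≤ K * 2 ^ k := fun k => by
    have : (1:ℝ) ≤ 2 ^ k := one_le_pow₀ (by norm_num)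
    nlinarith
  have hamono : ∀ k : ℕ, K * 2 ^ k ≤ K * 2 ^ (k+1) := fun k => by
    have := ha1 k
    rw [pow_succ]; linarith
  have hnn : ∀ x ∈ Set.Ioi (1:ℝ), 0 ≤ (x * L x)⁻¹ := fun x hx => by
    have h1 : (1:ℝ) < x := hx
    have := hLpos x h1.le
    have : 0 < x := by linarith
    positivity
  rw [← summable_nat_add_iff 1]
  have hii : ∀ a b : ℝ, 1 ≤ a → a ≤ b → IntervalIntegrable (fun x => (x * L x)⁻¹) volume a b := by
    intro a b h1 h2
    rw [intervalIntegrable_iff_integrableOn_Ioc_of_le h2]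
    exact hint.mono_set (fun x hx => lt_of_le_of_lt h1 hx.1)
  apply summable_of_sum_range_le (c := 1)
  · intro k; exact inv_nonneg.2 (hLpos _ (ha1 _)).le
  · intro N
    have hsum := intervalIntegral.sum_integral_adjacent_intervals (μ := volume)
      (f := fun x => (x * L x)⁻¹) (a := fun k : ℕ => K * 2 ^ k) (n := N)
      (fun k _ => hii _ _ (ha1 k) (hamono k))
    have hle : K * 2 ^ 0 ≤ K * 2 ^ N := by
      have : (1:ℝ) ≤ 2 ^ N := one_le_pow₀ (by norm_num)
      nlinarith
    have htot : ∫ x in (K * 2 ^ 0)..(K * 2 ^ N), (x * L x)⁻¹ ≤ 1 / 2 := by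
      rw [← h33, intervalIntegral.integral_of_le hle]
      apply setIntegral_mono_set hint
      · exact (ae_restrict_iff' measurableSet_Ioi).2 (Filter.Eventually.of_forall hnn)
      · exact LE.le.eventuallyLE
          (fun x hx => lt_of_le_of_lt (by simpa using hK) hx.1)
    have hterm : ∀ k ∈ Finset.range N, (1/2) * (L (K * 2 ^ (k+1)))⁻¹ ≤
        ∫ x in (K * 2 ^ k)..(K * 2 ^ (k+1)), (x * L x)⁻¹ := by
      intro k _
      have e : (1/2) * (L (K * 2 ^ (k+1)))⁻¹ = ∫ x in (K * 2 ^ k)..(K * 2 ^ (k+1)),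
          ((K * 2 ^ (k+1)) * L (K * 2 ^ (k+1)))⁻¹ := by
        rw [intervalIntegral.integral_const, smul_eq_mul, mul_inv, pow_succ]
        have : (K * 2 ^ k) ≠ 0 := by have := ha1 k; linarith
        field_simp
        ring
      rw [e]
      apply intervalIntegral.integral_mono_on (hamono k) intervalIntegrable_const (hii _ _ (ha1 k) (hamono k))
      intro x hx
      have hx1 : 1 ≤ x := (ha1 k).trans hx.1
      have p1 := hLpos x hx1
      apply inv_anti₀ (by positivity)
      have := hLmono x _ hx1 hx.2
      have := hx.2
      gcongr
    have := Finset.sum_le_sum hterm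
    rw [hsum, ← Finset.mul_sum] at this
    linarith

lemma aux_det (r lam0 eta ρ : ℝ) (hr1 : 1 < r) (hlam0 : 0 < lam0)
    (heta : 0 < eta) (hρ0 : 0 < ρ) (hρ : ρ < lam0 * eta)
    (L : ℝ → ℝ) (hLpos : ∀ x ≥ (1 : ℝ), 0 < L x)
    (hLmono : ∀ x y : ℝ, 1 ≤ x → x ≤ y → L x ≤ L y)
    (h31 : ∀ c ≥ (1 : ℝ), ∀ y ≥ (1 : ℝ), L (c * y) ≤ 3 * c * L y)
    (h33 : ∫ x in Set.Ioi (1 : ℝ), (x * L x)⁻¹ = 1 / 2) :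
    ∃ (lam w : ℕ → ℝ) (C1 : ℝ), Summable w ∧ 0 ≤ C1 ∧ (∀ k, 0 < w k) ∧
      (∀ k, 0 < lam k ∧ lam k < lam0) ∧
      ∀ y ≥ 0, ∀ a b : ℝ, 0 < b →
        (∀ k, Real.exp (lam k * a - (lam k * b) ^ r / r) < Real.exp y / w k) →
        a * (max b eta)⁻¹ *
            (max 1 (max (Real.log (L (max b eta))) 0)) ^ (-((r - 1) / r)) ≤ C1 + y / ρ := by
  set ell : ℝ → ℝ := fun x => max 1 (max (Real.log (L x)) 0) with hell
  have hell1 : ∀ x, 1 ≤ ell x := fun x => le_max_left _ _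
  have hellmono : ∀ x y, 1 ≤ x → x ≤ y → ell x ≤ ell y := by
    intro x y hx hxy
    have := Real.log_le_log (hLpos x hx) (hLmono x y hx hxy)
    simp only [hell]
    gcongr
  -- choice of K
  obtain ⟨K, hK1, hKη, hK⟩ : ∃ K : ℝ, 1 ≤ K ∧ eta ≤ K ∧ ∀ p ≥ K, ρ * ell p < lam0 * p := by
    have hlo := Real.isLittleO_log_id_atTop.def (c := lam0 / (2 * ρ)) (by positivity)
    set c := 1 + |Real.log (3 * L 1)| with hc
    have hlin := Filter.eventually_gt_atTop (2 * ρ * c / lam0)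
    obtain ⟨K, hKK⟩ := Filter.eventually_atTop.1 (hlo.and hlin)
    refine ⟨max K (max 1 eta), by simp, by simp, ?_⟩
    intro p hp
    have hp1 : 1 ≤ p := le_trans (by simp) hp
    obtain ⟨q1, q2⟩ := hKK p (le_trans (le_max_left _ _) hp)
    have hL1 := hLpos 1 le_rfl
    have q3 : ell p ≤ c + Real.log p := by
      have l0 := Real.log_nonneg hp1
      have l1 : Real.log (L p) ≤ Real.log (3 * L 1) + Real.log p := by
        rw [← Real.log_mul (by positivity) (by positivity)]
        apply Real.log_le_log (hLpos p hp1)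
        have := h31 p hp1 1 le_rfl
        rw [mul_one] at this
        linarith
      have l2 := le_abs_self (Real.log (3 * L 1))
      have l3 := abs_nonneg (Real.log (3 * L 1))
      simp only [hell]
      refine max_le (by linarith) (max_le (by linarith) (by linarith))
    have q4 : Real.log p ≤ lam0 / (2 * ρ) * p := by
      have := (le_abs_self _).trans q1
      rwa [id, Real.norm_eq_abs, abs_of_pos (by linarith)] at this
    rw [div_lt_iff₀ hlam0] at q2
    have q5 : ρ * Real.log p ≤ ρ * (lam0 / (2 * ρ) * p) := by gcongr
    have q6 : ρ * (lam0 / (2 * ρ) * p) = lam0 * p / 2 := by field_simp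
    have q7 : ρ * ell p ≤ ρ * (c + Real.log p) := by gcongr
    nlinarith
  set P : ℕ → ℝ := fun k => K * 2 ^ k with hP
  have hPK : ∀ k, K ≤ P k := fun k => by
    have : (1:ℝ) ≤ 2 ^ k := one_le_pow₀ (by norm_num)
    simp only [hP]; nlinarith
  have hP1 : ∀ k, 1 ≤ P k := fun k => hK1.trans (hPK k)
  have hPpos : ∀ k, 0 < P k := fun k => by linarith [hP1 k]
  set s : ℕ → ℝ := fun k => ell (P k) ^ (1 / r) with hs
  have hr0 : 0 < r := by linarith
  have hs1 : ∀ k, 1 ≤ s k := fun k => Real.one_le_rpow (hell1 _) (by positivity)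
  have hsle : ∀ k, s k ≤ ell (P k) := fun k => by
    conv_rhs => rw [← Real.rpow_one (ell (P k))]
    apply Real.rpow_le_rpow_of_exponent_le (hell1 _)
    rw [div_le_one hr0]; exact hr1.le
  set lam : ℕ → ℝ := fun k => Nat.casesOn k (ρ / eta) (fun k => ρ * s k / P k) with hlam
  set w : ℕ → ℝ := fun k => Nat.casesOn k 1 (fun k => (L (P k))⁻¹) with hw
  have hC2 : 0 ≤ (ρ / eta * K) ^ (r - 1) := by positivity
  have hC3 : 0 ≤ (2 * ρ) ^ (r - 1) + 1 / ρ := by positivity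
  refine ⟨lam, w, (ρ / eta * K) ^ (r - 1) + ((2 * ρ) ^ (r - 1) + 1 / ρ), ?_, by positivity, ?_, ?_, ?_⟩
  · rw [← summable_nat_add_iff 1]
    exact aux_sum L hLpos hLmono h33 K hK1
  · rintro (_ | k)
    · exact one_pos
    · exact inv_pos.2 (hLpos _ (hP1 k))
  · rintro (_ | k)
    · change 0 < ρ / eta ∧ ρ / eta < lam0
      refine ⟨by positivity, ?_⟩
      rwa [div_lt_iff₀ heta]
    · have := hs1 k
      have h' := hPpos k
      refine ⟨by simp only [hlam]; positivity, ?_⟩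
      simp only [hlam]
      rw [div_lt_iff₀ h']
      refine lt_of_le_of_lt ?_ (hK (P k) (hPK k))
      gcongr
      exact hsle k
  · intro y hy a b hb hyp
    set β := max b eta with hβ
    have hbβ : b ≤ β := le_max_left _ _
    have hηβ : eta ≤ β := le_max_right _ _
    have hβ0 : 0 < β := by linarith
    change a * β⁻¹ * ell β ^ (-((r - 1) / r)) ≤ _
    have hf0 : 0 ≤ ell β ^ (-((r - 1) / r)) := Real.rpow_nonneg (by linarith [hell1 β]) _
    have hexp0 : 0 ≤ (r - 1) / r := div_nonneg (by linarith) hr0.le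
    have hf1 : ell β ^ (-((r - 1) / r)) ≤ 1 :=
      Real.rpow_le_one_of_one_le_of_nonpos (hell1 β) (by linarith)
    -- general consequence
    have gen : ∀ l q : ℝ, 0 < l → l * a - (l * b) ^ r / r ≤ q →
        a * β⁻¹ ≤ (l * β) ^ (r - 1) + q / (l * β) := by
      intro l q hl hq
      have hlβ : 0 < l * β := by positivity
      have e1 : (l * b) ^ r / r ≤ (l * β) ^ r := by
        have t1 : (l * b) ^ r ≤ (l * β) ^ r := by gcongr
        have t2 : 0 ≤ (l * b) ^ r := by positivity
        exact (div_le_self t2 hr1.le).trans t1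
      have e2 : l * a ≤ (l * β) ^ r + q := by linarith
      have e3 : (l * β) ^ (r - 1) = (l * β) ^ r / (l * β) := Real.rpow_sub_one hlβ.ne' r
      rw [e3, ← add_div, le_div_iff₀ hlβ]
      have : a * β⁻¹ * (l * β) = l * a := by field_simp
      rw [this]; exact e2
    rcases le_total β K with hβK | hβK
    · have h0 := hyp 0
      have h0' : (ρ / eta) * a - ((ρ / eta) * b) ^ r / r ≤ y := by
        change Real.exp ((ρ / eta) * a - ((ρ / eta) * b) ^ r / r) < Real.exp y / 1 at h0
        rw [div_one] at h0
        exact (Real.exp_lt_exp.1 h0).le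
      have g := gen (ρ / eta) y (by positivity) h0'
      have g1 : (ρ / eta * β) ^ (r - 1) ≤ (ρ / eta * K) ^ (r - 1) := by
        apply Real.rpow_le_rpow (by positivity) (by gcongr) (by linarith)
      have g2 : y / (ρ / eta * β) ≤ y / ρ := by
        apply div_le_div_of_nonneg_left hy hρ0
        rw [div_mul_eq_mul_div, le_div_iff₀ heta]
        gcongr
      have X0 : 0 ≤ (ρ / eta * K) ^ (r - 1) + y / ρ := by positivity
      calc a * β⁻¹ * ell β ^ (-((r - 1) / r))
          ≤ ((ρ / eta * K) ^ (r - 1) + y / ρ) * ell β ^ (-((r - 1) / r)) := by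
            gcongr; linarith
        _ ≤ ((ρ / eta * K) ^ (r - 1) + y / ρ) * 1 := by gcongr
        _ ≤ _ := by linarith
    · have hK0 : 0 < K := by linarith
      obtain ⟨k, hk1, hk2⟩ := exists_nat_pow_near (x := β / K) (y := (2:ℝ))
        ((one_le_div hK0).2 hβK) (by norm_num)
      rw [le_div_iff₀ hK0] at hk1
      rw [div_lt_iff₀ hK0, pow_succ] at hk2
      have hPβ : P k ≤ β := by simp only [hP]; linarith
      have hβP : β ≤ 2 * P k := by simp only [hP]; linarith
      have hPk := hPpos k
      have hsk := hs1 k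
      have hLk := hLpos _ (hP1 k)
      have hk := hyp (k+1)
      have hk' : (ρ * s k / P k) * a - ((ρ * s k / P k) * b) ^ r / r ≤ y + ell (P k) := by
        have h' : Real.exp ((ρ * s k / P k) * a - ((ρ * s k / P k) * b) ^ r / r)
            < Real.exp y / (L (P k))⁻¹ := hk
        rw [div_inv_eq_mul, ← Real.exp_log hLk, ← Real.exp_add] at h'
        have t := Real.exp_lt_exp.1 h'
        have : Real.log (L (P k)) ≤ ell (P k) := by simp [hell]
        linarith
      have g := gen (ρ * s k / P k) _ (by positivity) hk'
      set u := ρ * s k / P k * β with hu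
      have hu1 : ρ * s k ≤ u := by
        rw [hu, div_mul_eq_mul_div, le_div_iff₀ hPk]; gcongr
      have hu2 : u ≤ 2 * ρ * s k := by
        rw [hu, div_mul_eq_mul_div, div_le_iff₀ hPk]
        calc ρ * s k * β ≤ ρ * s k * (2 * P k) := by gcongr
          _ = _ := by ring
      have hsr : (s k) ^ (r - 1) = ell (P k) ^ ((r - 1) / r) := by
        simp only [hs]
        rw [← Real.rpow_mul (by linarith [hell1 (P k)])]
        congr 1; ring
      have hsr' : (s k) ^ (r - 1) * s k = ell (P k) := by
        have : (s k) ^ (r - 1) * s k = (s k) ^ r := by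
          rw [Real.rpow_sub_one (by positivity)]; field_simp
        rw [this]; simp only [hs]
        rw [← Real.rpow_mul (by linarith [hell1 (P k)]), one_div, inv_mul_cancel₀ hr0.ne', Real.rpow_one]
      set v := (s k) ^ (r - 1) with hv
      have hv1 : 1 ≤ v := Real.one_le_rpow hsk (by linarith)
      have hf : ell β ^ (-((r - 1) / r)) ≤ v⁻¹ := by
        rw [hsr, Real.rpow_neg (by linarith [hell1 β])]
        apply inv_anti₀ (by rw [← hsr]; positivity)
        apply Real.rpow_le_rpow (by linarith [hell1 (P k)]) (hellmono _ _ (hP1 k) hPβ) hexp0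
      have g1 : u ^ (r - 1) ≤ (2 * ρ) ^ (r - 1) * v := by
        rw [hv, ← Real.mul_rpow (by positivity) (by positivity)]
        apply Real.rpow_le_rpow (by positivity) hu2 (by linarith)
      have g2 : (y + ell (P k)) / u ≤ (y + ell (P k)) / (ρ * s k) := by
        apply div_le_div_of_nonneg_left _ (by positivity) hu1
        linarith [hell1 (P k)]
      have X0 : 0 ≤ (2 * ρ) ^ (r - 1) * v + (y + ell (P k)) / (ρ * s k) := by
        have := hell1 (P k)
        positivity
      calc a * β⁻¹ * ell β ^ (-((r - 1) / r))
          ≤ ((2 * ρ) ^ (r - 1) * v + (y + ell (P k)) / (ρ * s k)) * ell β ^ (-((r - 1) / r)) := by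
            gcongr; linarith
        _ ≤ ((2 * ρ) ^ (r - 1) * v + (y + ell (P k)) / (ρ * s k)) * v⁻¹ := by gcongr
        _ = (2 * ρ) ^ (r - 1) + 1 / ρ + y / (ρ * (s k * v)) := by
            rw [← hsr']; field_simp; try ring
        _ ≤ (2 * ρ) ^ (r - 1) + 1 / ρ + y / ρ := by
            gcongr
            apply le_mul_of_one_le_right hρ0.le
            nlinarith
        _ ≤ _ := by linarith

/-- Theorem 4.1 (discrete time). -/
theorem stmt_13 (r lam0 eta ε : ℝ) (hr1 : 1 < r) (hr2 : r ≤ 2) (hlam0 : 0 < lam0)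
    (heta : 0 < eta) (hε0 : 0 < ε) (hε : ε < lam0 * eta)
    (L : ℝ → ℝ) (hLpos : ∀ x ≥ (1 : ℝ), 0 < L x)
    (hLmono : ∀ x y : ℝ, 1 ≤ x → x ≤ y → L x ≤ L y)
    (h31 : ∀ c ≥ (1 : ℝ), ∀ y ≥ (1 : ℝ), L (c * y) ≤ 3 * c * L y)
    (h32 : ∀ y ≥ (1 : ℝ), L (y ^ 2) ≤ 3 * L y)
    (h33 : ∫ x in Set.Ioi (1 : ℝ), (x * L x)⁻¹ = 1 / 2)
    (h : ℝ → ℝ) (hh0 : ∀ x, 0 ≤ h x)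
    (hhmono : ∀ x y : ℝ, 0 ≤ x → x ≤ y → h x ≤ h y)
    (hhexp : ∃ x₁ : ℝ, ∀ x ≥ x₁, h x ≤ Real.exp (ε * x)) :
    ∃ C : ℝ, ∀ (Ω : Type) (mΩ : MeasurableSpace Ω) (μ : Measure Ω),
      IsProbabilityMeasure μ →
      ∀ (ℱ : Filtration ℕ mΩ) (A B : ℕ → Ω → ℝ),
      Adapted ℱ A → Adapted ℱ B →
      (∀ ω, A 0 ω = 0) →
      (∀ n, 1 ≤ n → ∀ ω, 0 < B n ω) →
      (∀ m n : ℕ, 1 ≤ m → m ≤ n → ∀ ω, B m ω ≤ B n ω) →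
      (∀ lam : ℝ, 0 < lam → lam < lam0 →
        Supermartingale
          (fun n ω => Real.exp (lam * A n ω - (lam * B n ω) ^ r / r)) ℱ μ ∧
        ∀ n, ∫ ω, Real.exp (lam * A n ω - (lam * B n ω) ^ r / r) ∂μ ≤ 1) →
      ∫⁻ ω, ENNReal.ofReal
          (h (⨆ n, A n ω * (max (B n ω) eta)⁻¹ *
            (max 1 (max (Real.log (L (max (B n ω) eta))) 0)) ^ (-((r - 1) / r)))) ∂μ ≤
        ENNReal.ofReal C := by
  obtain ⟨x₁, hx₁⟩ := hhexp
  set ρ := (ε + lam0 * eta) / 2 with hρdef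
  have hερ : ε < ρ := by rw [hρdef]; linarith
  have hρ : ρ < lam0 * eta := by rw [hρdef]; linarith
  have hρ0 : 0 < ρ := by linarith
  obtain ⟨lam, w, C1, hws, hC1, hwpos, hlam, hdet⟩ :=
    aux_det r lam0 eta ρ hr1 hlam0 heta hρ0 hρ L hLpos hLmono h31 h33
  set W := ∑' k, w k with hW
  have hW0 : 0 ≤ W := tsum_nonneg (fun k => (hwpos k).le)
  set C2 := max C1 x₁ with hC2
  set g : ℕ → ℝ := fun m => Real.exp (ε * (C2 + m / ρ)) with hg
  have hgsum : Summable (fun m : ℕ => g (m+1) * (W * Real.exp (-m))) := by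
    have hq : Real.exp (ε / ρ - 1) < 1 := by
      rw [Real.exp_lt_one_iff, sub_neg, div_lt_one hρ0]; exact hερ
    have := (summable_geometric_of_lt_one (Real.exp_pos _).le hq).mul_left
      (Real.exp (ε * (C2 + 1 / ρ)) * W)
    refine this.congr (fun m => ?_)
    have e : g (m+1) = Real.exp (ε * (C2 + 1 / ρ)) * Real.exp (m * (ε / ρ)) := by
      simp only [hg]
      rw [← Real.exp_add]; congr 1; push_cast; ring
    rw [e, ← Real.exp_nat_mul]
    have e2 : Real.exp (m * (ε / ρ - 1)) = Real.exp (m * (ε / ρ)) * Real.exp (-m) := by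
      rw [← Real.exp_add]; congr 1; ring
    rw [e2]; ring
  refine ⟨g 0 + ∑' m : ℕ, g (m+1) * (W * Real.exp (-m)), ?_⟩
  intro Ω mΩ μ hμ ℱ A B hA hB hA0 hBpos hBmono hsup
  set M : ℕ → ℕ → Ω → ℝ :=
    fun k n ω => Real.exp (lam k * A n ω - (lam k * B n ω) ^ r / r) with hM
  set E : ℕ → Set Ω := fun m => ⋃ k, {ω | ∃ n, Real.exp m / w k ≤ M k n ω} with hE
  have hmx : ∀ m k : ℕ, MeasurableSet {ω | ∃ n, Real.exp m / w k ≤ M k n ω} ∧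
      μ {ω | ∃ n, Real.exp m / w k ≤ M k n ω} ≤ ENNReal.ofReal (1 / (Real.exp m / w k)) := by
    intro m k
    obtain ⟨s1, s2⟩ := hsup (lam k) (hlam k).1 (hlam k).2
    exact aux_max μ ℱ (M k) s1 (fun n ω => (Real.exp_pos _).le) (s2 0) _
      (div_pos (Real.exp_pos _) (hwpos k))
  have hEm : ∀ m, MeasurableSet (E m) := fun m => MeasurableSet.iUnion (fun k => (hmx m k).1)
  have hEμ : ∀ m : ℕ, μ (E m) ≤ ENNReal.ofReal (W * Real.exp (-m)) := by
    intro m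
    refine (measure_iUnion_le _).trans ?_
    rw [hW, ← tsum_mul_right, ENNReal.ofReal_tsum_of_nonneg _ (hws.mul_right _)]
    · refine ENNReal.tsum_le_tsum (fun k => (hmx m k).2.trans (le_of_eq ?_))
      rw [one_div_div, Real.exp_neg, div_eq_mul_inv]
    · intro k; exact mul_nonneg (hwpos k).le (Real.exp_pos _).le
  have hpt : ∀ ω, ENNReal.ofReal
          (h (⨆ n, A n ω * (max (B n ω) eta)⁻¹ *
            (max 1 (max (Real.log (L (max (B n ω) eta))) 0)) ^ (-((r - 1) / r)))) ≤
      ENNReal.ofReal (g 0) +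
        ∑' m : ℕ, (E m).indicator (fun _ => ENNReal.ofReal (g (m+1))) ω := by
    intro ω
    by_cases hall : ∀ m, ω ∈ E m
    · have : ∑' m : ℕ, (E m).indicator (fun _ => ENNReal.ofReal (g (m+1))) ω = ⊤ := by
        rw [← top_le_iff, ← ENNReal.tsum_const_eq_top_of_ne_zero (α := ℕ)
          (c := ENNReal.ofReal (g 0)) (by simp [hg, Real.exp_pos])]
        refine ENNReal.tsum_le_tsum (fun m => ?_)
        rw [Set.indicator_of_mem (hall m)]
        apply ENNReal.ofReal_le_ofReal
        simp only [hg]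
        gcongr
        omega
      rw [this]; simp
    · push Not at hall
      classical
      set m := Nat.find hall with hm
      have hmE : ω ∉ E m := Nat.find_spec hall
      have hbound : ∀ n, A n ω * (max (B n ω) eta)⁻¹ *
            (max 1 (max (Real.log (L (max (B n ω) eta))) 0)) ^ (-((r - 1) / r)) ≤ C2 + m / ρ := by
        intro n
        rcases Nat.eq_zero_or_pos n with rfl | hn
        · rw [hA0]
          have : C1 ≤ C2 := le_max_left _ _
          have h2 : (0:ℝ) ≤ m / ρ := by positivity
          simp only [zero_mul]; linarith
        · have := hdet m (Nat.cast_nonneg m) (A n ω) (B n ω) (hBpos n hn ω) (by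
            intro k
            by_contra hcon
            exact hmE (Set.mem_iUnion.2 ⟨k, n, not_lt.1 hcon⟩))
          have h1 : C1 ≤ C2 := le_max_left _ _
          linarith
      have hS0 : 0 ≤ (⨆ n, A n ω * (max (B n ω) eta)⁻¹ *
            (max 1 (max (Real.log (L (max (B n ω) eta))) 0)) ^ (-((r - 1) / r))) :=
        Real.iSup_nonneg' ⟨0, by rw [hA0]; simp⟩
      have hhS : h (⨆ n, A n ω * (max (B n ω) eta)⁻¹ *
            (max 1 (max (Real.log (L (max (B n ω) eta))) 0)) ^ (-((r - 1) / r))) ≤ g m := by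
        refine (hhmono _ _ hS0 (ciSup_le hbound)).trans (hx₁ _ ?_)
        have h1 : x₁ ≤ C2 := le_max_right _ _
        have h2 : (0:ℝ) ≤ m / ρ := by positivity
        linarith
      refine (ENNReal.ofReal_le_ofReal hhS).trans ?_
      rcases Nat.eq_zero_or_pos m with h0 | h0
      · rw [h0]; exact le_self_add
      · obtain ⟨j, hj⟩ : ∃ j, m = j + 1 := ⟨m - 1, by omega⟩
        have hjE : ω ∈ E j := by
          by_contra hcon
          have := Nat.find_min' hall hcon
          omega
        refine le_trans ?_ le_add_self
        refine le_trans ?_ (ENNReal.le_tsum j)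
        rw [Set.indicator_of_mem hjE, hj]
  refine (lintegral_mono hpt).trans ?_
  rw [lintegral_add_left measurable_const, lintegral_tsum
    (fun m => (measurable_const.indicator (hEm m)).aemeasurable)]
  have hgpos : ∀ m, 0 ≤ g m := fun m => (Real.exp_pos _).le
  have htn : ∀ m : ℕ, 0 ≤ g (m+1) * (W * Real.exp (-m)) := fun m =>
    mul_nonneg (hgpos _) (mul_nonneg hW0 (Real.exp_pos _).le)
  rw [ENNReal.ofReal_add (hgpos 0) (tsum_nonneg htn), ENNReal.ofReal_tsum_of_nonneg htn hgsum]
  gcongr with m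
  · simp
  · rw [lintegral_indicator_const (hEm m), ENNReal.ofReal_mul (hgpos _)]
    gcongr
    exact hEμ m
end

section
/- Let (X_n) be a martingale difference sequence with respect to a filtration (F_n), i.e., X_n is F_n-measurable, integrable, and E(X_n | F_{n−1}) = 0 a.s. for all n. Set S_n = X₁ + ⋯ + X_n and V_n = ( X₁² + ⋯ + X_n² )^{1/2}. Suppose that for each n there is an F_{n−1}-measurable random variable m_n with |X_n| ≤ m_n a.s., and that almost surely V_n → ∞ and m_n / ( V_n·(log log V_n)^{−1/2} ) → 0 as n → ∞. Then limsup_{n→∞} S_n / ( V_n·(log log V_n)^{1/2} ) = √2 almost surely. -/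
open MeasureTheory Filter

namespace LIL

/-- measurable with respect to `m` and a.e. bounded -/
def BA {Ω : Type*} (m : MeasurableSpace Ω) {mΩ : MeasurableSpace Ω} (μ : Measure Ω)
    (g : Ω → ℝ) : Prop :=
  StronglyMeasurable[m] g ∧ ∃ C : ℝ, ∀ᵐ ω ∂μ, |g ω| ≤ C

section BAlemmas
variable {Ω : Type*} {m m' : MeasurableSpace Ω} {mΩ : MeasurableSpace Ω} {μ : Measure Ω}
  {f g : Ω → ℝ}

lemma BA.const (c : ℝ) : BA m μ (fun _ => c) :=
  ⟨stronglyMeasurable_const, |c|, Eventually.of_forall fun _ => le_rfl⟩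

lemma BA.mono (h : m ≤ m') (hf : BA m μ f) : BA m' μ f := ⟨hf.1.mono h, hf.2⟩

lemma BA.mul (hf : BA m μ f) (hg : BA m μ g) : BA m μ (fun ω => f ω * g ω) := by
  obtain ⟨hf, C, hC⟩ := hf
  obtain ⟨hg, D, hD⟩ := hg
  refine ⟨hf.mul hg, C * D, ?_⟩
  filter_upwards [hC, hD] with ω h1 h2
  rw [abs_mul]
  exact mul_le_mul h1 h2 (abs_nonneg _) ((abs_nonneg _).trans h1)

lemma BA.add (hf : BA m μ f) (hg : BA m μ g) : BA m μ (fun ω => f ω + g ω) := by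
  obtain ⟨hf, C, hC⟩ := hf
  obtain ⟨hg, D, hD⟩ := hg
  refine ⟨hf.add hg, C + D, ?_⟩
  filter_upwards [hC, hD] with ω h1 h2
  exact (abs_add_le _ _).trans (add_le_add h1 h2)

lemma BA.const_mul (c : ℝ) (hf : BA m μ f) : BA m μ (fun ω => c * f ω) := (BA.const c).mul hf

lemma BA.sub (hf : BA m μ f) (hg : BA m μ g) : BA m μ (fun ω => f ω - g ω) := by
  have := hf.add (hg.const_mul (-1))
  refine (congrArg (BA m μ) ?_).mp this
  funext ω; ring

lemma BA.indicator (hf : BA m μ f) {s : Set Ω} (hs : MeasurableSet[m] s) :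
    BA m μ (s.indicator f) := by
  obtain ⟨hf, C, hC⟩ := hf
  refine ⟨hf.indicator hs, C, ?_⟩
  filter_upwards [hC] with ω h
  by_cases hω : ω ∈ s
  · simpa [hω] using h
  · simpa [hω] using (abs_nonneg _).trans h

lemma BA.sum {ι : Type*} (s : Finset ι) {f : ι → Ω → ℝ} (hf : ∀ i ∈ s, BA m μ (f i)) :
    BA m μ (fun ω => ∑ i ∈ s, f i ω) := by
  classical
  induction s using Finset.induction_on with
  | empty => simpa using BA.const (m := m) (μ := μ) 0
  | insert a s ha ih =>
    simp only [Finset.sum_insert ha]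
    exact (hf a (by simp)).add (ih fun i hi => hf i (by simp [hi]))

lemma BA.prod {ι : Type*} (s : Finset ι) {f : ι → Ω → ℝ} (hf : ∀ i ∈ s, BA m μ (f i)) :
    BA m μ (fun ω => ∏ i ∈ s, f i ω) := by
  classical
  induction s using Finset.induction_on with
  | empty => simpa using BA.const (m := m) (μ := μ) 1
  | insert a s ha ih =>
    simp only [Finset.prod_insert ha]
    exact (hf a (by simp)).mul (ih fun i hi => hf i (by simp [hi]))

lemma BA.integrable [IsProbabilityMeasure μ] (hm : m ≤ mΩ) (hf : BA m μ f) : Integrable f μ := by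
  obtain ⟨hf, C, hC⟩ := hf
  exact Integrable.of_bound (hf.mono hm).aestronglyMeasurable C hC

end BAlemmas

section prob
variable {Ω : Type*} {mΩ : MeasurableSpace Ω} {μ : Measure Ω}
    [IsProbabilityMeasure μ] {ℱ : Filtration ℕ mΩ} {X : ℕ → Ω → ℝ}

lemma integrable_mul (hint : ∀ n, Integrable (X n) μ) {n : ℕ} {g : Ω → ℝ} (hg : BA (ℱ n) μ g) :
    Integrable (fun ω => X n ω * g ω) μ := by
  obtain ⟨hg, C, hC⟩ := hg
  exact (hint n).mul_bdd (hg.mono (ℱ.le n)).aestronglyMeasurable hC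

lemma integral_mul_zero (hint : ∀ n, Integrable (X n) μ) (hcond : ∀ n, μ[X n | ℱ n] =ᵐ[μ] 0)
    {n : ℕ} {g : Ω → ℝ} (hg : BA (ℱ n) μ g) :
    ∫ ω, X n ω * g ω ∂μ = 0 := by
  have h1 := integrable_mul hint hg
  have h2 : μ[g * X n | ℱ n] =ᵐ[μ] g * μ[X n | ℱ n] := by
    refine condExp_mul_of_stronglyMeasurable_left hg.1 ?_ (hint n)
    refine h1.congr (Eventually.of_forall fun ω => ?_)
    simp [mul_comm]
  have h3 : ∫ ω, X n ω * g ω ∂μ = ∫ ω, (g * X n) ω ∂μ := by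
    congr 1; funext ω; simp [mul_comm]
  rw [h3, ← integral_condExp (ℱ.le n)]
  rw [integral_congr_ae (g := 0)]
  · simp
  · filter_upwards [h2, hcond n] with ω h4 h5
    simp [h4, h5]

lemma integral_le_of_step (hint : ∀ n, Integrable (X n) μ) (hcond : ∀ n, μ[X n | ℱ n] =ᵐ[μ] 0)
    {Y H : ℕ → Ω → ℝ} (hY : ∀ n, BA (ℱ n) μ (Y n)) (hH : ∀ n, BA (ℱ n) μ (H n))
    (hstep : ∀ n, ∀ᵐ ω ∂μ, Y (n + 1) ω ≤ Y n ω + X n ω * H n ω) (n : ℕ) :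
    ∫ ω, Y n ω ∂μ ≤ ∫ ω, Y 0 ω ∂μ := by
  induction n with
  | zero => exact le_rfl
  | succ n ih =>
    refine le_trans ?_ ih
    have h1 := integral_mul_zero hint hcond (hH n)
    have h2 := integrable_mul hint (hH n)
    have h3 := (hY n).integrable (ℱ.le n)
    calc ∫ ω, Y (n + 1) ω ∂μ ≤ ∫ ω, (Y n ω + X n ω * H n ω) ∂μ :=
          integral_mono_ae ((hY (n + 1)).integrable (ℱ.le _)) (h3.add h2) (hstep n)
      _ = ∫ ω, Y n ω ∂μ := by rw [integral_add h3 h2, h1, add_zero]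

lemma ville (hint : ∀ n, Integrable (X n) μ) (hcond : ∀ n, μ[X n | ℱ n] =ᵐ[μ] 0)
    {Z H : ℕ → Ω → ℝ} (hZ : ∀ n, BA (ℱ n) μ (Z n)) (hH : ∀ n, BA (ℱ n) μ (H n))
    (hpos : ∀ n ω, 0 ≤ Z n ω) (h0 : ∀ ω, Z 0 ω = 1)
    (hstep : ∀ n, ∀ᵐ ω ∂μ, Z (n + 1) ω ≤ Z n ω + X n ω * H n ω) {c : ℝ} (hc : 1 < c) :
    μ {ω | ∃ n, c ≤ Z n ω} ≤ ENNReal.ofReal (1 / c) := by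
  classical
  set E : ℕ → Set Ω := fun n => {ω | ∀ i ≤ n, Z i ω < c} with hE
  have hEm : ∀ n, MeasurableSet[ℱ n] (E n) := by
    intro n
    have : E n = ⋂ i ∈ Set.Iic n, {ω | Z i ω < c} := by
      ext ω; simp [hE]
    rw [this]
    refine MeasurableSet.biInter (Set.to_countable _) fun i hi => ?_
    exact ((hZ i).1.mono (ℱ.mono hi)).measurable measurableSet_Iio
  set Y : ℕ → Ω → ℝ := fun n ω => (E n).indicator (Z n) ω + (E n)ᶜ.indicator (fun _ => c) ω with hYd
  have hY : ∀ n, BA (ℱ n) μ (Y n) := fun n =>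
    ((hZ n).indicator (hEm n)).add ((BA.const c).indicator (hEm n).compl)
  have hH' : ∀ n, BA (ℱ n) μ ((E n).indicator (H n)) := fun n => (hH n).indicator (hEm n)
  have hYin : ∀ n ω, ω ∈ E n → Y n ω = Z n ω := by
    intro n ω h; simp [hYd, h]
  have hYout : ∀ n ω, ω ∉ E n → Y n ω = c := by
    intro n ω h; simp [hYd, h]
  have hs : ∀ n, ∀ᵐ ω ∂μ, Y (n + 1) ω ≤ Y n ω + X n ω * (E n).indicator (H n) ω := by
    intro n
    filter_upwards [hstep n] with ω h
    by_cases hω : ω ∈ E n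
    · rw [hYin n ω hω, Set.indicator_of_mem hω]
      refine le_trans ?_ h
      by_cases h2 : ω ∈ E (n + 1)
      · rw [hYin _ _ h2]
      · rw [hYout _ _ h2]
        by_contra h3
        push Not at h3
        apply h2
        intro i hi
        rcases Nat.lt_or_ge i (n + 1) with h4 | h4
        · exact hω i (by omega)
        · have : i = n + 1 := by omega
          rw [this]; exact h3
    · have h2 : ω ∉ E (n + 1) := fun h2 => hω fun i hi => h2 i (by omega)
      rw [hYout _ _ hω, hYout _ _ h2, Set.indicator_of_notMem hω]
      simp
  have hmain := fun n => integral_le_of_step hint hcond hY hH' hs n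
  have hY0 : ∫ ω, Y 0 ω ∂μ = 1 := by
    have : ∀ ω, Y 0 ω = 1 := by
      intro ω
      have : ω ∈ E 0 := by
        intro i hi
        have : i = 0 := by omega
        rw [this, h0]; exact hc
      rw [hYin _ _ this, h0]
    simp [this]
  rw [hY0] at hmain
  have hYpos : ∀ n ω, 0 ≤ Y n ω := by
    intro n ω
    by_cases h : ω ∈ E n
    · rw [hYin _ _ h]; exact hpos _ _
    · rw [hYout _ _ h]; linarith
  have hb : ∀ n, μ ((E n)ᶜ) ≤ ENNReal.ofReal (1 / c) := by
    intro n
    have h1 := mul_meas_ge_le_integral_of_nonneg (μ := μ) (Eventually.of_forall (hYpos n))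
      ((hY n).integrable (ℱ.le n)) c
    have h2 : μ.real ((E n)ᶜ) ≤ μ.real {ω | c ≤ Y n ω} := by
      refine measureReal_mono ?_
      intro ω hω
      exact (hYout n ω hω).ge
    rw [← ofReal_measureReal]
    apply ENNReal.ofReal_le_ofReal
    rw [le_div_iff₀ (by linarith)]
    have := hmain n
    nlinarith
  have hU : {ω | ∃ n, c ≤ Z n ω} = ⋃ n, (E n)ᶜ := by
    ext ω
    simp only [Set.mem_setOf_eq, Set.mem_iUnion, Set.mem_compl_iff, hE, not_forall, not_lt]
    constructor
    · rintro ⟨n, hn⟩; exact ⟨n, n, le_rfl, hn⟩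
    · rintro ⟨n, i, hi, h⟩; exact ⟨i, h⟩
  rw [hU]
  have hmono : Monotone fun n => (E n)ᶜ := by
    intro a b hab
    apply Set.compl_subset_compl.2
    intro ω h i hi
    exact h i (hi.trans hab)
  rw [hmono.measure_iUnion]
  exact iSup_le hb

/-- product of betting strategies on disjoint blocks -/
lemma prod_le (hint : ∀ n, Integrable (X n) μ) (hcond : ∀ n, μ[X n | ℱ n] =ᵐ[μ] 0)
    {F H : ℕ → ℕ → Ω → ℝ} {A : ℕ → ℕ → Set Ω} (hF : ∀ k n, BA (ℱ n) μ (F k n))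
    (hH : ∀ k n, BA (ℱ n) μ (H k n)) (hA : ∀ k n, MeasurableSet[ℱ n] (A k n))
    (hdisj : ∀ n ω j k, ω ∈ A j n → ω ∈ A k n → j = k)
    (hpos : ∀ k, ∀ᵐ ω ∂μ, ∀ n, 0 ≤ F k n ω) (h0 : ∀ k ω, F k 0 ω = 1)
    (hstep : ∀ k, ∀ᵐ ω ∂μ, ∀ n, F k (n + 1) ω ≤ F k n ω + X n ω * H k n ω)
    (hoff : ∀ k n ω, ω ∉ A k n → F k (n + 1) ω = F k n ω) (s : Finset ℕ) (n : ℕ) :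
    ∫ ω, ∏ k ∈ s, F k n ω ∂μ ≤ 1 := by
  classical
  set G : ℕ → Ω → ℝ := fun n ω =>
    ∑ k ∈ s, (A k n).indicator (fun ω => (∏ j ∈ s.erase k, F j n ω) * H k n ω) ω with hG
  have hGm : ∀ n, BA (ℱ n) μ (G n) := fun n => BA.sum _ fun k _ =>
    ((BA.prod _ fun j _ => hF j n).mul (hH k n)).indicator (hA k n)
  have := integral_le_of_step hint hcond (Y := fun n ω => ∏ k ∈ s, F k n ω)
    (fun n => BA.prod _ fun j _ => hF j n) hGm ?_ n
  · simpa [h0] using this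
  intro n
  filter_upwards [ae_all_iff.2 hpos, ae_all_iff.2 hstep] with ω h1 h2
  by_cases hex : ∃ k ∈ s, ω ∈ A k n
  · obtain ⟨k, hk, hkA⟩ := hex
    have hGe : G n ω = (∏ j ∈ s.erase k, F j n ω) * H k n ω := by
      simp only [hG]
      rw [Finset.sum_eq_single k]
      · rw [Set.indicator_of_mem hkA]
      · intro j _ hj
        rw [Set.indicator_of_notMem]
        intro hj'
        exact hj (hdisj n ω _ _ hj' hkA)
      · intro h; exact absurd hk h
    rw [hGe, ← Finset.mul_prod_erase s _ hk, ← Finset.mul_prod_erase s _ hk]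
    have h3 : ∏ j ∈ s.erase k, F j (n + 1) ω = ∏ j ∈ s.erase k, F j n ω := by
      refine Finset.prod_congr rfl fun j hj => hoff _ _ _ ?_
      intro hj'
      exact (Finset.ne_of_mem_erase hj) (hdisj n ω _ _ hj' hkA)
    rw [h3]
    have h4 : 0 ≤ ∏ j ∈ s.erase k, F j n ω := Finset.prod_nonneg fun j _ => h1 j n
    have := mul_le_mul_of_nonneg_right (h2 k n) h4
    linarith
  · push Not at hex
    have hGe : G n ω = 0 := by
      simp only [hG]
      refine Finset.sum_eq_zero fun j hj => ?_
      rw [Set.indicator_of_notMem (hex j hj)]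
    rw [hGe, mul_zero, add_zero]
    exact (Finset.prod_congr rfl fun j hj => hoff _ _ _ (hex j hj)).le

lemma exists_fail (hint : ∀ n, Integrable (X n) μ) (hcond : ∀ n, μ[X n | ℱ n] =ᵐ[μ] 0)
    {F H : ℕ → ℕ → Ω → ℝ} {A : ℕ → ℕ → Set Ω} (hF : ∀ k n, BA (ℱ n) μ (F k n))
    (hH : ∀ k n, BA (ℱ n) μ (H k n)) (hA : ∀ k n, MeasurableSet[ℱ n] (A k n))
    (hdisj : ∀ n ω j k, ω ∈ A j n → ω ∈ A k n → j = k)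
    (hpos : ∀ k, ∀ᵐ ω ∂μ, ∀ n, 0 ≤ F k n ω) (h0 : ∀ k ω, F k 0 ω = 1)
    (hstep : ∀ k, ∀ᵐ ω ∂μ, ∀ n, F k (n + 1) ω ≤ F k n ω + X n ω * H k n ω)
    (hoff : ∀ k n ω, ω ∉ A k n → F k (n + 1) ω = F k n ω)
    {c : ℝ} (hc : 0 < c) :
    ∀ᵐ ω ∂μ, ∃ᶠ k in atTop, ∃ᶠ n in atTop, F k n ω < 1 + c / (k + 1) := by
  have key : ∀ k0 : ℕ, μ {ω | ∀ k ≥ k0, ∀ᶠ n in atTop, 1 + c / (k + 1) ≤ F k n ω} = 0 := by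
    intro k0
    set B := {ω | ∀ k ≥ k0, ∀ᶠ n in atTop, 1 + c / ((k : ℝ) + 1) ≤ F k n ω} with hB
    set P : ℕ → ℝ := fun K => ∏ k ∈ Finset.Ico k0 K, (1 + c / ((k : ℝ) + 1)) with hP
    have hPpos : ∀ K, 0 < P K := fun K => Finset.prod_pos fun k _ => by positivity
    have h1 : ∀ K, μ B ≤ ENNReal.ofReal (1 / P K) := by
      intro K
      set C : ℕ → Set Ω := fun n => {ω | P K ≤ ∏ k ∈ Finset.Ico k0 K, F k n ω} with hC
      have hCb : ∀ n, μ (C n) ≤ ENNReal.ofReal (1 / P K) := by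
        intro n
        have hnn : 0 ≤ᵐ[μ] fun ω => ∏ k ∈ Finset.Ico k0 K, F k n ω := by
          filter_upwards [ae_all_iff.2 hpos] with ω h
          exact Finset.prod_nonneg fun j _ => h j n
        have h3 := mul_meas_ge_le_integral_of_nonneg (μ := μ) hnn
          ((BA.prod _ fun j _ => hF j n).integrable (ℱ.le n)) (P K)
        have h4 := prod_le hint hcond hF hH hA hdisj hpos h0 hstep hoff (Finset.Ico k0 K) n
        rw [← ofReal_measureReal]
        apply ENNReal.ofReal_le_ofReal
        rw [le_div_iff₀ (hPpos K)]
        linarith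
      have hsub : B ⊆ ⋃ N, ⋂ n ≥ N, C n := by
        intro ω hω
        have : ∀ᶠ n in atTop, ∀ k ∈ Finset.Ico k0 K, 1 + c / ((k : ℝ) + 1) ≤ F k n ω := by
          rw [Filter.eventually_all_finset]
          intro k hk
          exact hω k (Finset.mem_Ico.1 hk).1
        obtain ⟨N, hN⟩ := eventually_atTop.1 this
        simp only [Set.mem_iUnion, Set.mem_iInter]
        refine ⟨N, fun n hn => ?_⟩
        exact Finset.prod_le_prod (fun k _ => by positivity) (hN n hn)
      refine (measure_mono hsub).trans ?_
      have hmono : Monotone fun N => ⋂ n ≥ N, C n := by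
        intro a b hab ω h
        simp only [Set.mem_iInter] at h ⊢
        exact fun n hn => h n (hab.trans hn)
      rw [hmono.measure_iUnion]
      refine iSup_le fun N => ?_
      refine (measure_mono ?_).trans (hCb N)
      intro ω h
      simp only [Set.mem_iInter] at h
      exact h N le_rfl
    have hPt : Tendsto P atTop atTop := by
      have h5 : Tendsto (fun K => c * (∑ i ∈ Finset.range K, 1 / ((i : ℝ) + 1)
          - ∑ i ∈ Finset.range k0, 1 / ((i : ℝ) + 1))) atTop atTop := by
        refine Tendsto.const_mul_atTop hc ?_
        exact tendsto_atTop_add_const_right _ _ Real.tendsto_sum_range_one_div_nat_succ_atTop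
      refine tendsto_atTop_mono' _ ?_ h5
      filter_upwards [eventually_ge_atTop k0] with K hK
      have h6 : ∑ k ∈ Finset.Ico k0 K, c / ((k : ℝ) + 1) ≤ P K := by
        have : ∀ s : Finset ℕ, 1 + ∑ k ∈ s, c / ((k : ℝ) + 1) ≤ ∏ k ∈ s, (1 + c / ((k : ℝ) + 1)) := by
          intro s
          induction s using Finset.induction_on with
          | empty => simp
          | insert a s ha ih =>
            rw [Finset.sum_insert ha, Finset.prod_insert ha]
            have h7 : 0 ≤ ∑ k ∈ s, c / ((k : ℝ) + 1) := Finset.sum_nonneg fun k _ => by positivity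
            have h8 : 0 ≤ c / ((a : ℝ) + 1) := by positivity
            nlinarith
        linarith [this (Finset.Ico k0 K)]
      refine le_trans (le_of_eq ?_) h6
      rw [Finset.sum_Ico_eq_sub _ hK, mul_sub, Finset.mul_sum, Finset.mul_sum]
      simp only [mul_one_div]
    have h9 : Tendsto (fun K => ENNReal.ofReal (1 / P K)) atTop (nhds 0) := by
      have := ENNReal.tendsto_ofReal (tendsto_inv_atTop_zero.comp hPt)
      simpa using this
    exact le_antisymm (ge_of_tendsto' h9 h1) zero_le
  have : ∀ᵐ ω ∂μ, ∀ k0 : ℕ, ¬ (∀ k ≥ k0, ∀ᶠ n in atTop, 1 + c / ((k : ℝ) + 1) ≤ F k n ω) := by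
    rw [ae_all_iff]
    intro k0
    rw [ae_iff]
    simpa using key k0
  filter_upwards [this] with ω h
  rw [frequently_atTop]
  intro k0
  have := h k0
  push Not at this
  obtain ⟨k, hk, h2⟩ := this
  refine ⟨k, hk, ?_⟩
  simpa [Filter.not_eventually] using h2

end prob

lemma exp_bounds {y δ : ℝ} (hδ : δ ≤ 1) (hy : |y| ≤ δ / 4) :
    Real.exp (y - (1 + δ) / 2 * y ^ 2) ≤ 1 + y ∧ 1 + y ≤ Real.exp (y - (1 - δ) / 2 * y ^ 2) := by
  have h1 : |(-y)| < 1 := by rw [abs_neg]; linarith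
  have h := Real.abs_log_sub_add_sum_range_le h1 2
  rw [abs_neg] at h
  simp only [Finset.sum_range_succ, Finset.sum_range_zero] at h
  norm_num at h
  have hpos : 0 < 1 + y := by
    have := neg_abs_le y
    linarith
  have h2 : |y| ^ 3 / (1 - |y|) ≤ δ / 2 * y ^ 2 := by
    rw [div_le_iff₀ (by linarith), ← sq_abs y]
    have h3 : 0 ≤ |y| := abs_nonneg y
    nlinarith [mul_nonneg (sq_nonneg |y|) h3, sq_nonneg |y|,
      mul_nonneg (sq_nonneg |y|) (sub_nonneg.2 hy)]
  have h3 := abs_le.1 (h.trans h2)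
  constructor
  · rw [← Real.le_log_iff_exp_le hpos]
    linarith [h3.1]
  · rw [← Real.log_le_iff_le_exp hpos]
    linarith [h3.2]

noncomputable section

variable {Ω : Type*}

def Dn (A : ℕ → Set Ω) (X : ℕ → Ω → ℝ) (n : ℕ) (ω : Ω) : ℝ :=
  ∑ i ∈ Finset.range n, (A i).indicator (X i) ω

def qn (A : ℕ → Set Ω) (X : ℕ → Ω → ℝ) (n : ℕ) (ω : Ω) : ℝ :=
  ∑ i ∈ Finset.range n, ((A i).indicator (X i) ω) ^ 2

def Ex (A : ℕ → Set Ω) (X : ℕ → Ω → ℝ) (a b : ℝ) (n : ℕ) (ω : Ω) : ℝ :=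
  Real.exp (a * Dn A X n ω - b * qn A X n ω)

end

section prob2
variable {Ω : Type*} {mΩ : MeasurableSpace Ω} {μ : Measure Ω}
    {ℱ : Filtration ℕ mΩ} {X : ℕ → Ω → ℝ} {A : ℕ → Set Ω}

lemma Ex_BA (hX : ∀ n, StronglyMeasurable[ℱ (n + 1)] (X n)) (hA : ∀ n, MeasurableSet[ℱ n] (A n))
    {a b ρ : ℝ} (hb : 0 ≤ b) (hρ : ∀ᵐ ω ∂μ, ∀ n, ω ∈ A n → |a * X n ω| ≤ ρ) (n : ℕ) :
    BA (ℱ n) μ (Ex A X a b n) := by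
  have hi : ∀ i ∈ Finset.range n, StronglyMeasurable[ℱ n] (fun ω => (A i).indicator (X i) ω) := by
    intro i hi
    have hi := Finset.mem_range.1 hi
    exact ((hX i).mono (ℱ.mono hi)).indicator (ℱ.mono hi.le _ (hA i))
  have h1 : StronglyMeasurable[ℱ n] (Dn A X n) :=
    Finset.stronglyMeasurable_fun_sum _ hi
  have h2 : StronglyMeasurable[ℱ n] (qn A X n) :=
    Finset.stronglyMeasurable_fun_sum _ fun i h => (hi i h).pow 2
  refine ⟨Real.continuous_exp.comp_stronglyMeasurable ((h1.const_mul a).sub (h2.const_mul b)),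
    Real.exp (n * |ρ|), ?_⟩
  filter_upwards [hρ] with ω h
  rw [Ex, Real.abs_exp]
  apply Real.exp_le_exp.2
  have h3 : 0 ≤ qn A X n ω := Finset.sum_nonneg fun i _ => sq_nonneg _
  have h4 : a * Dn A X n ω ≤ n * |ρ| := by
    rw [Dn, Finset.mul_sum]
    calc ∑ i ∈ Finset.range n, a * (A i).indicator (X i) ω ≤ ∑ i ∈ Finset.range n, |ρ| := by
          refine Finset.sum_le_sum fun i _ => ?_
          by_cases hω : ω ∈ A i
          · rw [Set.indicator_of_mem hω]
            exact (le_abs_self _).trans ((h i hω).trans (le_abs_self _))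
          · rw [Set.indicator_of_notMem hω]; simp
      _ = n * |ρ| := by simp
  nlinarith [mul_nonneg hb h3]

lemma Ex_succ (a b : ℝ) (n : ℕ) (ω : Ω) : Ex A X a b (n + 1) ω = Ex A X a b n ω *
    Real.exp (a * (A n).indicator (X n) ω - b * ((A n).indicator (X n) ω) ^ 2) := by
  rw [Ex, Ex, ← Real.exp_add, Dn, Dn, qn, qn, Finset.sum_range_succ, Finset.sum_range_succ]
  congr 1; ring

lemma Ex_step_le {a δ : ℝ} (hδ : δ ≤ 1) {n : ℕ} {ω : Ω} (h : ω ∈ A n → |a * X n ω| ≤ δ / 4) :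
    Ex A X a ((1 + δ) / 2 * a ^ 2) (n + 1) ω ≤ Ex A X a ((1 + δ) / 2 * a ^ 2) n ω +
      X n ω * (A n).indicator (fun ω => a * Ex A X a ((1 + δ) / 2 * a ^ 2) n ω) ω := by
  rw [Ex_succ]
  by_cases hω : ω ∈ A n
  · rw [Set.indicator_of_mem hω, Set.indicator_of_mem hω]
    have h1 := (exp_bounds hδ (h hω)).1
    have h2 : 0 < Ex A X a ((1 + δ) / 2 * a ^ 2) n ω := Real.exp_pos _
    have h3 := mul_le_mul_of_nonneg_left h1 h2.le
    have h4 : a * X n ω - (1 + δ) / 2 * a ^ 2 * X n ω ^ 2 =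
      a * X n ω - (1 + δ) / 2 * (a * X n ω) ^ 2 := by ring
    rw [h4]
    linarith
  · rw [Set.indicator_of_notMem hω, Set.indicator_of_notMem hω]; simp

lemma Ex_step_ge {a δ : ℝ} (hδ : δ ≤ 1) {n : ℕ} {ω : Ω} (h : ω ∈ A n → |a * X n ω| ≤ δ / 4) :
    Ex A X a ((1 - δ) / 2 * a ^ 2) n ω +
      X n ω * (A n).indicator (fun ω => a * Ex A X a ((1 - δ) / 2 * a ^ 2) n ω) ω ≤
    Ex A X a ((1 - δ) / 2 * a ^ 2) (n + 1) ω := by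
  rw [Ex_succ]
  by_cases hω : ω ∈ A n
  · rw [Set.indicator_of_mem hω, Set.indicator_of_mem hω]
    have h1 := (exp_bounds hδ (h hω)).2
    have h2 : 0 < Ex A X a ((1 - δ) / 2 * a ^ 2) n ω := Real.exp_pos _
    have h3 := mul_le_mul_of_nonneg_left h1 h2.le
    have h4 : a * X n ω - (1 - δ) / 2 * a ^ 2 * X n ω ^ 2 =
      a * X n ω - (1 - δ) / 2 * (a * X n ω) ^ 2 := by ring
    rw [h4]
    linarith
  · rw [Set.indicator_of_notMem hω, Set.indicator_of_notMem hω]; simp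

end prob2

section prob3
variable {Ω : Type*} {mΩ : MeasurableSpace Ω} {μ : Measure Ω}
    [IsProbabilityMeasure μ] {ℱ : Filtration ℕ mΩ} {X M : ℕ → Ω → ℝ}

lemma upper_prob (hX : ∀ n, StronglyMeasurable[ℱ (n + 1)] (X n))
    (hint : ∀ n, Integrable (X n) μ) (hcond : ∀ n, μ[X n | ℱ n] =ᵐ[μ] 0)
    (hM : ∀ n, StronglyMeasurable[ℱ n] (M n)) (hbd : ∀ᵐ ω ∂μ, ∀ n, |X n ω| ≤ M n ω)
    {δ : ℝ} (hδ0 : 0 < δ) (hδ : δ ≤ 1) (l : ℕ → ℝ) (hl : ∀ k, 0 ≤ l k) :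
    ∀ᵐ ω ∂μ, ∀ᶠ k : ℕ in atTop, ∀ n,
      l k * Dn (fun i => {ω | l k * M i ω ≤ δ / 4}) X n ω
        - (1 + δ) / 2 * (l k) ^ 2 * qn (fun i => {ω | l k * M i ω ≤ δ / 4}) X n ω
        ≤ (1 + δ) * Real.log k := by
  set A : ℕ → ℕ → Set Ω := fun k i => {ω | l k * M i ω ≤ δ / 4} with hAd
  have hA : ∀ k n, MeasurableSet[ℱ n] (A k n) := fun k n =>
    ((hM n).const_mul (l k)).measurable measurableSet_Iic
  have hρ : ∀ k, ∀ᵐ ω ∂μ, ∀ n, ω ∈ A k n → |l k * X n ω| ≤ δ / 4 := by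
    intro k
    filter_upwards [hbd] with ω h n hn
    rw [abs_mul, abs_of_nonneg (hl k)]
    exact (mul_le_mul_of_nonneg_left (h n) (hl k)).trans hn
  set s : ℕ → Set Ω := fun k => {ω | 2 ≤ k ∧ ∃ n, (k : ℝ) ^ (1 + δ) ≤
    Ex (A k) X (l k) ((1 + δ) / 2 * (l k) ^ 2) n ω} with hs
  have hsb : ∀ k, μ (s k) ≤ ENNReal.ofReal (1 / (k : ℝ) ^ (1 + δ)) := by
    intro k
    by_cases hk : 2 ≤ k
    · have hBA : ∀ n, BA (ℱ n) μ (Ex (A k) X (l k) ((1 + δ) / 2 * (l k) ^ 2) n) := fun n =>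
        Ex_BA hX (hA k) (by positivity) (hρ k) n
      have hc : 1 < (k : ℝ) ^ (1 + δ) :=
        Real.one_lt_rpow (by exact_mod_cast hk) (by linarith)
      have := ville hint hcond hBA (fun n => ((hBA n).const_mul (l k)).indicator (hA k n))
        (fun n ω => (Real.exp_pos _).le) (fun ω => by simp [Ex, Dn, qn]) (fun n => by
          filter_upwards [hρ k] with ω h
          exact Ex_step_le hδ (h n)) hc
      refine le_trans (measure_mono ?_) this
      rintro ω ⟨_, h⟩; exact h
    · have : s k = ∅ := by
        ext ω; simp [hs, hk]
      rw [this]; simp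
  have hsum : ∑' k, μ (s k) ≠ ⊤ := by
    have h1 : Summable fun k : ℕ => 1 / (k : ℝ) ^ (1 + δ) :=
      Real.summable_one_div_nat_rpow.2 (by linarith)
    refine ne_top_of_le_ne_top ?_ (ENNReal.tsum_le_tsum hsb)
    exact h1.tsum_ofReal_ne_top
  filter_upwards [ae_eventually_notMem hsum] with ω hω
  filter_upwards [hω, eventually_ge_atTop 2] with k hk hk2 n
  have h1 : ¬ ∃ n, (k : ℝ) ^ (1 + δ) ≤ Ex (A k) X (l k) ((1 + δ) / 2 * (l k) ^ 2) n ω :=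
    fun h => hk ⟨hk2, h⟩
  push Not at h1
  have h2 := h1 n
  have hk0 : (0 : ℝ) < k := by positivity
  rw [Ex, Real.rpow_def_of_pos hk0, Real.exp_lt_exp] at h2
  linarith

/-- the betting function -/
noncomputable def Lf (ε d u : ℝ) : ℝ :=
  Real.exp (d - (1 - ε ^ 2 / 16) / 2 * u)
    - 1 / 4 * Real.exp ((1 + ε) * d - (1 + ε ^ 2 / 16) / 2 * (1 + ε) ^ 2 * u)
    - 1 / 4 * Real.exp ((1 - ε) * d - (1 + ε ^ 2 / 16) / 2 * (1 - ε) ^ 2 * u)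

lemma Lf_le {ε d u : ℝ} (h0 : 0 < ε) (h1 : ε ≤ 1 / 4) (hu : 0 ≤ u) :
    Lf ε d u ≤ Real.exp (Real.log 4 / ε) * Real.exp (u * (1 / 2 + 2 * ε)) := by
  have hp1 := Real.exp_pos ((1 + ε) * d - (1 + ε ^ 2 / 16) / 2 * (1 + ε) ^ 2 * u)
  have hp2 := Real.exp_pos ((1 - ε) * d - (1 + ε ^ 2 / 16) / 2 * (1 - ε) ^ 2 * u)
  rw [← Real.exp_add]
  have hε2 : ε ^ 2 ≤ ε / 4 := by nlinarith
  rcases le_or_gt d ((1 + ε) * u + Real.log 4 / ε) with h | h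
  · have : Real.exp (d - (1 - ε ^ 2 / 16) / 2 * u) ≤
        Real.exp (Real.log 4 / ε + u * (1 / 2 + 2 * ε)) := by
      apply Real.exp_le_exp.2
      nlinarith [mul_nonneg hu h0.le, mul_le_mul_of_nonneg_left hε2 hu]
    rw [Lf]; linarith
  · have h3 : Real.log 4 + (1 + ε) * ε * u ≤ ε * d := by
      have := mul_le_mul_of_nonneg_left h.le h0.le
      have h4 : ε * (Real.log 4 / ε) = Real.log 4 := by field_simp
      nlinarith
    have : Real.exp (d - (1 - ε ^ 2 / 16) / 2 * u) ≤
        1 / 4 * Real.exp ((1 + ε) * d - (1 + ε ^ 2 / 16) / 2 * (1 + ε) ^ 2 * u) := by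
      have h4 : (1 / 4 : ℝ) = Real.exp (- Real.log 4) := by
        rw [Real.exp_neg, Real.exp_log (by norm_num)]; norm_num
      rw [h4, ← Real.exp_add]
      apply Real.exp_le_exp.2
      have h5 : ε ^ 2 / 16 / 2 * ((1 + ε) ^ 2 + 1) ≤ ε ^ 2 / 8 := by
        nlinarith [sq_nonneg ε]
      nlinarith [mul_le_mul_of_nonneg_left h5 hu, mul_nonneg hu (sq_nonneg ε)]
    have h6 := Real.exp_pos (Real.log 4 / ε + u * (1 / 2 + 2 * ε))
    rw [Lf]; linarith

lemma Lf_pos {ε d u : ℝ} (h0 : 0 < ε) (h1 : ε ≤ 1 / 4) (hu : 4 * Real.log 4 ≤ ε ^ 2 * u)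
    (hL : 0 < Lf ε d u) : (1 - ε) * u < d := by
  by_contra h
  push Not at h
  have hp1 := Real.exp_pos ((1 + ε) * d - (1 + ε ^ 2 / 16) / 2 * (1 + ε) ^ 2 * u)
  have hlog : 0 < Real.log 4 := Real.log_pos (by norm_num)
  have hu0 : 0 ≤ u := by
    by_contra h
    push Not at h
    nlinarith [sq_nonneg ε]
  have : Real.exp (d - (1 - ε ^ 2 / 16) / 2 * u) ≤
      1 / 4 * Real.exp ((1 - ε) * d - (1 + ε ^ 2 / 16) / 2 * (1 - ε) ^ 2 * u) := by
    have h4 : (1 / 4 : ℝ) = Real.exp (- Real.log 4) := by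
      rw [Real.exp_neg, Real.exp_log (by norm_num)]; norm_num
    rw [h4, ← Real.exp_add]
    apply Real.exp_le_exp.2
    have h5 : ε ^ 2 / 16 / 2 * ((1 - ε) ^ 2 + 1) ≤ ε ^ 2 / 16 := by
      have h7 : (1 - ε) ^ 2 ≤ 1 := pow_le_one₀ (by linarith) (by linarith)
      have h8 := mul_le_mul_of_nonneg_left h7 (sq_nonneg ε)
      linarith
    have h6 := mul_le_mul_of_nonneg_left h h0.le
    nlinarith [mul_le_mul_of_nonneg_left h5 hu0]
  rw [Lf] at hL
  linarith

noncomputable def lam (ε R : ℝ) (k : ℕ) : ℝ :=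
  Real.sqrt (2 * Real.log ((k : ℝ) + 1) / ((1 + 4 * ε) * R ^ (k + 1)))

def Ablk (X M : ℕ → Ω → ℝ) (ε R : ℝ) (k i : ℕ) : Set Ω :=
  {ω | lam ε R k * M i ω ≤ ε ^ 2 / 128 ∧
    R ^ k ≤ ∑ j ∈ Finset.range i, X j ω ^ 2 ∧ ∑ j ∈ Finset.range i, X j ω ^ 2 < R ^ (k + 1)}

lemma Lf_eq (A : ℕ → Set Ω) (ε l : ℝ) (n : ℕ) (ω : Ω) :
    Lf ε (l * Dn A X n ω) (l ^ 2 * qn A X n ω) =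
      Ex A X l ((1 - ε ^ 2 / 16) / 2 * l ^ 2) n ω
      - 1 / 4 * Ex A X ((1 + ε) * l) ((1 + ε ^ 2 / 16) / 2 * ((1 + ε) * l) ^ 2) n ω
      - 1 / 4 * Ex A X ((1 - ε) * l) ((1 + ε ^ 2 / 16) / 2 * ((1 - ε) * l) ^ 2) n ω := by
  simp only [Lf, Ex]
  congr 2
  · congr 1; ring
  · congr 2; ring
  · congr 1; ring

lemma lower_prob (hX : ∀ n, StronglyMeasurable[ℱ (n + 1)] (X n))
    (hint : ∀ n, Integrable (X n) μ) (hcond : ∀ n, μ[X n | ℱ n] =ᵐ[μ] 0)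
    (hM : ∀ n, StronglyMeasurable[ℱ n] (M n)) (hbd : ∀ᵐ ω ∂μ, ∀ n, |X n ω| ≤ M n ω)
    {ε R : ℝ} (hε0 : 0 < ε) (hε : ε ≤ 1 / 4) (hR : 1 < R) :
    ∀ᵐ ω ∂μ, ∃ᶠ k : ℕ in atTop, ∃ᶠ n in atTop,
      0 < Lf ε (lam ε R k * Dn (Ablk X M ε R k) X n ω)
        ((lam ε R k) ^ 2 * qn (Ablk X M ε R k) X n ω) := by
  set l := lam ε R with hl
  set A := Ablk X M ε R with hAd
  have hl0 : ∀ k, 0 ≤ l k := fun k => Real.sqrt_nonneg _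
  have hQ : ∀ i, StronglyMeasurable[ℱ i] (fun ω => ∑ j ∈ Finset.range i, X j ω ^ 2) := fun i =>
    Finset.stronglyMeasurable_fun_sum _ fun j hj =>
      ((hX j).mono (ℱ.mono (Finset.mem_range.1 hj))).pow 2
  have hA : ∀ k n, MeasurableSet[ℱ n] (A k n) := fun k n => by
    refine MeasurableSet.inter (((hM n).const_mul (l k)).measurable measurableSet_Iic) ?_
    exact MeasurableSet.inter ((hQ n).measurable measurableSet_Ici)
      ((hQ n).measurable measurableSet_Iio)
  have hρ : ∀ k, ∀ᵐ ω ∂μ, ∀ n, ω ∈ A k n → |l k * X n ω| ≤ ε ^ 2 / 128 := by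
    intro k
    filter_upwards [hbd] with ω h n hn
    rw [abs_mul, abs_of_nonneg (hl0 k)]
    exact (mul_le_mul_of_nonneg_left (h n) (hl0 k)).trans hn.1
  have hρ0 : ∀ k, ∀ᵐ ω ∂μ, ∀ n, ω ∈ A k n → |l k * X n ω| ≤ ε ^ 2 / 16 / 4 := by
    intro k
    filter_upwards [hρ k] with ω h n hn
    refine (h n hn).trans ?_
    nlinarith [sq_nonneg ε]
  have hρ1 : ∀ k, ∀ᵐ ω ∂μ, ∀ n, ω ∈ A k n → |(1 + ε) * l k * X n ω| ≤ ε ^ 2 / 16 / 4 := by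
    intro k
    filter_upwards [hρ k] with ω h n hn
    rw [mul_assoc, abs_mul, abs_of_nonneg (by linarith)]
    have := h n hn
    nlinarith [abs_nonneg (l k * X n ω)]
  have hρ2 : ∀ k, ∀ᵐ ω ∂μ, ∀ n, ω ∈ A k n → |(1 - ε) * l k * X n ω| ≤ ε ^ 2 / 16 / 4 := by
    intro k
    filter_upwards [hρ k] with ω h n hn
    rw [mul_assoc, abs_mul, abs_of_nonneg (by linarith)]
    have := h n hn
    nlinarith [abs_nonneg (l k * X n ω)]
  have hδ : ε ^ 2 / 16 ≤ 1 := by nlinarith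
  have hE0 : ∀ k n, BA (ℱ n) μ (Ex (A k) X (l k) ((1 - ε ^ 2 / 16) / 2 * (l k) ^ 2) n) :=
    fun k n => Ex_BA hX (hA k) (mul_nonneg (by linarith) (sq_nonneg _)) (hρ0 k) n
  have hE1 : ∀ k n, BA (ℱ n) μ
      (Ex (A k) X ((1 + ε) * l k) ((1 + ε ^ 2 / 16) / 2 * ((1 + ε) * l k) ^ 2) n) :=
    fun k n => Ex_BA hX (hA k) (by positivity) (hρ1 k) n
  have hE2 : ∀ k n, BA (ℱ n) μ
      (Ex (A k) X ((1 - ε) * l k) ((1 + ε ^ 2 / 16) / 2 * ((1 - ε) * l k) ^ 2) n) :=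
    fun k n => Ex_BA hX (hA k) (by positivity) (hρ2 k) n
  set LL : ℕ → ℕ → Ω → ℝ := fun k n ω =>
    Lf ε (l k * Dn (A k) X n ω) ((l k) ^ 2 * qn (A k) X n ω) with hLL
  have hLBA : ∀ k n, BA (ℱ n) μ (LL k n) := by
    intro k n
    have := ((hE0 k n).sub ((hE1 k n).const_mul (1 / 4))).sub ((hE2 k n).const_mul (1 / 4))
    refine (congrArg (BA (ℱ n) μ) ?_).mp this
    funext ω
    exact (Lf_eq _ _ _ _ _).symm
  set h : ℕ → ℕ → Ω → ℝ := fun k n ω =>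
    (A k n).indicator (fun ω => l k * Ex (A k) X (l k) ((1 - ε ^ 2 / 16) / 2 * (l k) ^ 2) n ω) ω
    - 1 / 4 * (A k n).indicator (fun ω => (1 + ε) * l k *
        Ex (A k) X ((1 + ε) * l k) ((1 + ε ^ 2 / 16) / 2 * ((1 + ε) * l k) ^ 2) n ω) ω
    - 1 / 4 * (A k n).indicator (fun ω => (1 - ε) * l k *
        Ex (A k) X ((1 - ε) * l k) ((1 + ε ^ 2 / 16) / 2 * ((1 - ε) * l k) ^ 2) n ω) ω with hh
  have hhBA : ∀ k n, BA (ℱ n) μ (h k n) := fun k n =>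
    ((((hE0 k n).const_mul (l k)).indicator (hA k n)).sub
      ((((hE1 k n).const_mul ((1 + ε) * l k)).indicator (hA k n)).const_mul (1 / 4))).sub
      ((((hE2 k n).const_mul ((1 - ε) * l k)).indicator (hA k n)).const_mul (1 / 4))
  have hLstep : ∀ k, ∀ᵐ ω ∂μ, ∀ n, LL k n ω + X n ω * h k n ω ≤ LL k (n + 1) ω := by
    intro k
    filter_upwards [hρ0 k, hρ1 k, hρ2 k] with ω h0 h1 h2 n
    have e0 := Ex_step_ge hδ (h0 n)
    have e1 := Ex_step_le hδ (h1 n)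
    have e2 := Ex_step_le hδ (h2 n)
    simp only [hLL, hh, Lf_eq]
    linarith
  set C : ℝ := Real.exp (Real.log 4 / ε) * Real.exp 1 with hC
  have hCpos : 0 < C := by positivity
  have hub : ∀ k, ∀ᵐ ω ∂μ, ∀ n, LL k n ω ≤ C * (k + 1) := by
    intro k
    filter_upwards [hρ k] with ω hr n
    have hq0 : 0 ≤ (l k) ^ 2 * qn (A k) X n ω :=
      mul_nonneg (sq_nonneg _) (Finset.sum_nonneg fun i _ => sq_nonneg _)
    refine (Lf_le hε0 hε hq0).trans ?_
    have hRp : 0 < R ^ (k + 1) := by positivity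
    have hlog : 0 ≤ Real.log ((k : ℝ) + 1) := Real.log_nonneg (by
      have : (0 : ℝ) ≤ k := Nat.cast_nonneg k
      linarith)
    have hlsq : (l k) ^ 2 = 2 * Real.log ((k : ℝ) + 1) / ((1 + 4 * ε) * R ^ (k + 1)) := by
      rw [hl, lam, Real.sq_sqrt (by positivity)]
    have hqb : ∀ n, (l k) ^ 2 * qn (A k) X n ω ≤ (l k) ^ 2 * R ^ (k + 1) + 1 := by
      intro n
      induction n with
      | zero =>
        have h0 : qn (A k) X 0 ω = 0 := by simp [qn]
        rw [h0, mul_zero]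
        positivity
      | succ n ih =>
        by_cases hω : ω ∈ A k n
        · have h1 : qn (A k) X n ω ≤ ∑ j ∈ Finset.range n, X j ω ^ 2 := by
            refine Finset.sum_le_sum fun i _ => ?_
            by_cases hi : ω ∈ A k i
            · rw [Set.indicator_of_mem hi]
            · rw [Set.indicator_of_notMem hi]; nlinarith [sq_nonneg (X i ω)]
          have h2 : ∑ j ∈ Finset.range n, X j ω ^ 2 < R ^ (k + 1) := hω.2.2
          have h3 : qn (A k) X (n + 1) ω = qn (A k) X n ω + X n ω ^ 2 := by
            rw [qn, Finset.sum_range_succ, Set.indicator_of_mem hω, qn]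
          have h4 : (l k * X n ω) ^ 2 ≤ 1 := by
            have := hr n hω
            rw [← sq_abs]
            have h5 : |l k * X n ω| ≤ 1 := this.trans (by nlinarith)
            exact pow_le_one₀ (abs_nonneg _) h5
          rw [h3]
          have := mul_le_mul_of_nonneg_left (h1.trans h2.le) (sq_nonneg (l k))
          nlinarith
        · have h3 : qn (A k) X (n + 1) ω = qn (A k) X n ω := by
            rw [qn, Finset.sum_range_succ, Set.indicator_of_notMem hω, qn]; simp
          rw [h3]; exact ih
    have h1 : (l k) ^ 2 * R ^ (k + 1) * (1 / 2 + 2 * ε) = Real.log ((k : ℝ) + 1) := by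
      rw [hlsq]; field_simp; ring
    have h2 : (l k) ^ 2 * qn (A k) X n ω * (1 / 2 + 2 * ε) ≤ 1 + Real.log ((k : ℝ) + 1) := by
      have := mul_le_mul_of_nonneg_right (hqb n) (show 0 ≤ 1 / 2 + 2 * ε by linarith)
      nlinarith
    have h3 : Real.exp ((l k) ^ 2 * qn (A k) X n ω * (1 / 2 + 2 * ε)) ≤
        Real.exp 1 * ((k : ℝ) + 1) := by
      refine (Real.exp_le_exp.2 h2).trans ?_
      rw [Real.exp_add, Real.exp_log (by positivity)]
    rw [hC, mul_assoc (Real.exp (Real.log 4 / ε))]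
    exact mul_le_mul_of_nonneg_left h3 (Real.exp_pos _).le
  have := exists_fail hint hcond (F := fun k n ω => 1 - (1 / (C * (k + 1))) * (LL k n ω - 1 / 2))
    (H := fun k n ω => -(1 / (C * (k + 1))) * h k n ω) (A := A) (c := 1 / (2 * C))
    (fun k n => (BA.const 1).sub (((hLBA k n).sub (BA.const _)).const_mul _))
    (fun k n => (hhBA k n).const_mul _) hA ?_ ?_ ?_ ?_ ?_ (by positivity)
  · filter_upwards [this] with ω hω
    refine hω.mono fun k hk => hk.mono fun n hn => ?_
    have hpos : 0 < 1 / (C * ((k : ℝ) + 1)) := by positivity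
    have h1 : 1 / (2 * C) / ((k : ℝ) + 1) = 1 / (C * ((k : ℝ) + 1)) * (1 / 2) := by
      field_simp
    rw [h1] at hn
    have : 0 < 1 / (C * ((k : ℝ) + 1)) * LL k n ω := by linarith
    exact (pos_iff_pos_of_mul_pos this).1 hpos
  · intro n ω j k hj hk
    by_contra hne
    rcases Nat.lt_or_gt_of_ne hne with hlt | hlt
    · have := hj.2.2.trans_le (pow_le_pow_right₀ hR.le (show j + 1 ≤ k from hlt))
      exact absurd hk.2.1 (not_le.2 this)
    · have := hk.2.2.trans_le (pow_le_pow_right₀ hR.le (show k + 1 ≤ j from hlt))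
      exact absurd hj.2.1 (not_le.2 this)
  · intro k
    filter_upwards [hub k] with ω hω n
    have hpos : 0 < C * ((k : ℝ) + 1) := by positivity
    have : 1 / (C * ((k : ℝ) + 1)) * (LL k n ω - 1 / 2) ≤ 1 := by
      rw [one_div_mul_eq_div, div_le_one hpos]
      linarith [hω n]
    linarith
  · intro k ω
    have : LL k 0 ω = 1 / 2 := by
      simp only [hLL, Lf, Dn, qn]; norm_num
    simp only [this]; norm_num
  · intro k
    filter_upwards [hLstep k] with ω hω n
    have hpos : 0 < 1 / (C * ((k : ℝ) + 1)) := by positivity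
    have := mul_le_mul_of_nonneg_left (hω n) hpos.le
    nlinarith
  · intro k n ω hω
    have h3 : qn (A k) X (n + 1) ω = qn (A k) X n ω := by
      rw [qn, Finset.sum_range_succ, Set.indicator_of_notMem hω, qn]; simp
    have h4 : Dn (A k) X (n + 1) ω = Dn (A k) X n ω := by
      rw [Dn, Finset.sum_range_succ, Set.indicator_of_notMem hω, Dn]; simp
    simp only [hLL, h3, h4]

end prob3

noncomputable def ell (T : ℝ) : ℝ := Real.log (Real.log (Real.sqrt T))

lemma log_sqrt_pos {s : ℝ} (hs : 1 < s) : 0 < Real.log (Real.sqrt s) :=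
  Real.log_pos (by rw [Real.lt_sqrt (by norm_num)]; simpa using hs)

lemma ell_mono {s t : ℝ} (hs : 1 < s) (hst : s ≤ t) : ell s ≤ ell t := by
  have h1 := log_sqrt_pos hs
  have h2 : 0 < Real.sqrt s := Real.sqrt_pos.2 (by linarith)
  exact Real.log_le_log h1 (Real.log_le_log h2 (Real.sqrt_le_sqrt hst))

lemma tendsto_sqrt : Tendsto Real.sqrt atTop atTop := Real.tendsto_sqrt_atTop

lemma tendsto_ell : Tendsto ell atTop atTop :=
  Real.tendsto_log_atTop.comp (Real.tendsto_log_atTop.comp tendsto_sqrt)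

lemma ell_le_sqrt {T : ℝ} (hT : 1 < T) : ell T ≤ Real.sqrt T := by
  have h1 := log_sqrt_pos hT
  exact (Real.log_le_self h1.le).trans (Real.log_le_self (Real.sqrt_nonneg _))

lemma ell_sqrt {T : ℝ} (hT : 1 < T) : ell (Real.sqrt T) = ell T - Real.log 2 := by
  have h1 := log_sqrt_pos hT
  rw [ell, ell, Real.log_sqrt (Real.sqrt_nonneg _), Real.log_div h1.ne' (by norm_num)]

lemma ell_pow {R : ℝ} (hR : 1 < R) {k : ℕ} (hk : 0 < k) :
    ell (R ^ k) = Real.log k + Real.log (Real.log R / 2) := by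
  have h1 : 0 < Real.log R := Real.log_pos hR
  have hk' : (0 : ℝ) < k := by exact_mod_cast hk
  rw [ell, Real.log_sqrt (by positivity), Real.log_pow, mul_div_assoc,
    Real.log_mul hk'.ne' (by positivity)]

lemma tendsto_log_nat : Tendsto (fun k : ℕ => Real.log k) atTop atTop :=
  Real.tendsto_log_atTop.comp tendsto_natCast_atTop_atTop

lemma tendsto_log_nat1 : Tendsto (fun k : ℕ => Real.log ((k : ℝ) + 1)) atTop atTop :=
  Real.tendsto_log_atTop.comp (tendsto_atTop_add_const_right _ _ tendsto_natCast_atTop_atTop)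

lemma log_le_ell {R δ : ℝ} (hR : 1 < R) (hδ : 0 < δ) :
    ∀ᶠ k : ℕ in atTop, Real.log k ≤ (1 + δ) * ell (R ^ k) := by
  filter_upwards [eventually_gt_atTop 0, tendsto_log_nat.eventually_ge_atTop
    (-(1 + δ) * Real.log (Real.log R / 2) / δ)] with k hk h
  rw [ell_pow hR hk]
  rw [div_le_iff₀ hδ] at h
  linarith

lemma ell_le_log {R ε : ℝ} (hR : 1 < R) (hε : 0 < ε) :
    ∀ᶠ k : ℕ in atTop, ell (2 * R ^ (k + 1)) ≤ (1 + ε) * Real.log ((k : ℝ) + 1) := by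
  filter_upwards [tendsto_log_nat1.eventually_ge_atTop
    (Real.log (Real.log (2 * R) / 2) / ε)] with k h
  have h0 : 1 < R ^ (k + 1) := one_lt_pow₀ hR (by omega)
  have h1 : 2 * R ^ (k + 1) ≤ (2 * R) ^ (k + 1) := by
    rw [mul_pow]
    refine mul_le_mul_of_nonneg_right ?_ (by linarith)
    calc (2 : ℝ) = 2 ^ 1 := by norm_num
      _ ≤ 2 ^ (k + 1) := pow_le_pow_right₀ (by norm_num) (by omega)
  refine (ell_mono (by linarith) h1).trans ?_
  rw [ell_pow (by linarith) (by omega)]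
  push_cast
  rw [div_le_iff₀ hε] at h
  linarith

section det
variable {x m : ℕ → ℝ}

lemma Q_mono {a b : ℕ} (h : a ≤ b) :
    ∑ i ∈ Finset.range a, x i ^ 2 ≤ ∑ i ∈ Finset.range b, x i ^ 2 :=
  Finset.sum_le_sum_of_subset_of_nonneg (Finset.range_mono h) fun _ _ _ => sq_nonneg _

lemma Q_tendsto
    (hV : Tendsto (fun n => Real.sqrt (∑ i ∈ Finset.range n, x i ^ 2)) atTop atTop) :
    Tendsto (fun n => ∑ i ∈ Finset.range n, x i ^ 2) atTop atTop := by
  refine tendsto_atTop_mono' _ ?_ hV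
  filter_upwards [hV.eventually_ge_atTop 1] with n hn
  have h : 0 ≤ ∑ i ∈ Finset.range n, x i ^ 2 := Finset.sum_nonneg fun _ _ => sq_nonneg _
  nlinarith [Real.sq_sqrt h]

lemma reg (hx : ∀ n, |x n| ≤ m n)
    (hV : Tendsto (fun n => Real.sqrt (∑ i ∈ Finset.range n, x i ^ 2)) atTop atTop)
    (hm : Tendsto (fun n => m n / (Real.sqrt (∑ i ∈ Finset.range (n + 1), x i ^ 2) /
      Real.sqrt (ell (∑ i ∈ Finset.range (n + 1), x i ^ 2)))) atTop (nhds 0))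
    {c : ℝ} (hc : 0 < c) :
    ∀ᶠ T in atTop, ∀ i, ∑ j ∈ Finset.range i, x j ^ 2 ≤ T → m i ^ 2 * ell T ≤ c * T := by
  set Q : ℕ → ℝ := fun n => ∑ i ∈ Finset.range n, x i ^ 2 with hQd
  have hQ : Tendsto Q atTop atTop := Q_tendsto hV
  have hQ1 : Tendsto (fun n => Q (n + 1)) atTop atTop := hQ.comp (tendsto_add_atTop_nat 1)
  set a : ℝ := min (1 / 2) (Real.sqrt c / 4) with ha
  have ha0 : 0 < a := lt_min (by norm_num) (by positivity)
  have ha1 : a ^ 2 ≤ 1 / 4 := by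
    have : a ≤ 1 / 2 := min_le_left _ _
    nlinarith
  have ha2 : 16 * a ^ 2 ≤ c := by
    have : a ≤ Real.sqrt c / 4 := min_le_right _ _
    nlinarith [Real.sq_sqrt hc.le]
  have hm0 : ∀ n, 0 ≤ m n := fun n => (abs_nonneg _).trans (hx n)
  have hev : ∀ᶠ n in atTop, m n ^ 2 * ell (Q (n + 1)) ≤ a ^ 2 * Q (n + 1) ∧
      1 ≤ ell (Q (n + 1)) := by
    filter_upwards [hm.eventually_lt_const ha0, (tendsto_ell.comp hQ1).eventually_ge_atTop 1,
      hQ1.eventually_gt_atTop 0] with n h1 h2 h3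
    refine ⟨?_, h2⟩
    have h2' : 1 ≤ ell (Q (n + 1)) := h2
    have hs1 : 0 < Real.sqrt (Q (n + 1)) := Real.sqrt_pos.2 h3
    have hs2 : 0 < Real.sqrt (ell (Q (n + 1))) := Real.sqrt_pos.2 (by linarith)
    rw [div_lt_iff₀ (by positivity), mul_div_assoc', lt_div_iff₀ hs2] at h1
    have := pow_le_pow_left₀ (mul_nonneg (hm0 n) hs2.le) h1.le 2
    rwa [mul_pow, mul_pow, Real.sq_sqrt (by linarith), Real.sq_sqrt h3.le] at this
  obtain ⟨N, hN⟩ := eventually_atTop.1 hev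
  set B : ℝ := ∑ i ∈ Finset.range N, m i ^ 2 with hB
  have hB0 : 0 ≤ B := Finset.sum_nonneg fun _ _ => sq_nonneg _
  filter_upwards [eventually_gt_atTop 1, tendsto_ell.eventually_ge_atTop (2 * Real.log 2),
    tendsto_sqrt.eventually_ge_atTop (B / c)] with T hT1 hT2 hT3 i hi
  have hT0 : 0 ≤ T := by linarith
  have hsT : 0 ≤ Real.sqrt T := Real.sqrt_nonneg _
  have hsq := Real.sq_sqrt hT0
  have hle := ell_le_sqrt hT1
  have hlog2 : 0 < Real.log 2 := Real.log_pos (by norm_num)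
  rcases Nat.lt_or_ge i N with hiN | hiN
  · have h1 : m i ^ 2 ≤ B :=
      Finset.single_le_sum (f := fun i => m i ^ 2) (fun _ _ => sq_nonneg _)
        (Finset.mem_range.2 hiN)
    rw [div_le_iff₀ hc] at hT3
    calc m i ^ 2 * ell T ≤ B * Real.sqrt T := mul_le_mul h1 hle (by linarith) hB0
      _ ≤ (Real.sqrt T * c) * Real.sqrt T := mul_le_mul_of_nonneg_right hT3 hsT
      _ = c * T := by nlinarith
  · obtain ⟨h1, h2⟩ := hN i hiN
    have hQs : Q (i + 1) = Q i + x i ^ 2 := Finset.sum_range_succ _ _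
    have hxm : x i ^ 2 ≤ m i ^ 2 := by
      rw [← sq_abs]; exact pow_le_pow_left₀ (abs_nonneg _) (hx i) 2
    have hQi : Q i ≤ T := hi
    have hQi0 : 0 ≤ Q i := Finset.sum_nonneg fun _ _ => sq_nonneg _
    have h3 : m i ^ 2 ≤ a ^ 2 * Q (i + 1) := by nlinarith [sq_nonneg (m i)]
    have hQ10 : 0 ≤ Q (i + 1) := Finset.sum_nonneg fun _ _ => sq_nonneg _
    have h4 : Q (i + 1) ≤ 2 * T := by nlinarith
    rcases le_or_gt (Real.sqrt T) (Q (i + 1)) with h5 | h5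
    · have hs1 : 1 < Real.sqrt T := by
        rw [Real.lt_sqrt (by norm_num)]; simpa using hT1
      have h6 := ell_mono hs1 h5
      rw [ell_sqrt hT1] at h6
      have h7 : ell T ≤ 2 * ell (Q (i + 1)) := by linarith
      have h8 := mul_le_mul_of_nonneg_left h7 (sq_nonneg (m i))
      nlinarith [mul_le_mul_of_nonneg_left h4 (sq_nonneg a)]
    · calc m i ^ 2 * ell T ≤ (a ^ 2 * Real.sqrt T) * Real.sqrt T := by
            refine mul_le_mul ?_ hle (by linarith) (by positivity)
            exact h3.trans (mul_le_mul_of_nonneg_left h5.le (sq_nonneg _))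
        _ ≤ c * T := by nlinarith [sq_nonneg a]

lemma reg2 (hx : ∀ n, |x n| ≤ m n)
    (hV : Tendsto (fun n => Real.sqrt (∑ i ∈ Finset.range n, x i ^ 2)) atTop atTop)
    (hm : Tendsto (fun n => m n / (Real.sqrt (∑ i ∈ Finset.range (n + 1), x i ^ 2) /
      Real.sqrt (ell (∑ i ∈ Finset.range (n + 1), x i ^ 2)))) atTop (nhds 0))
    {c R : ℝ} (hc : 0 < c) (hR : 1 < R) :
    ∀ᶠ k : ℕ in atTop, ∀ i, ∑ j ∈ Finset.range i, x j ^ 2 ≤ R ^ (k + 1) →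
      2 * Real.log ((k : ℝ) + 1) * m i ^ 2 ≤ c * R ^ (k + 1) := by
  have hp : Tendsto (fun k : ℕ => R ^ (k + 1)) atTop atTop :=
    (tendsto_pow_atTop_atTop_of_one_lt hR).comp (tendsto_add_atTop_nat 1)
  have h1 := hp.eventually (reg hx hV hm (show 0 < c / 4 by positivity))
  have h2 := (tendsto_add_atTop_nat 1).eventually (log_le_ell hR one_pos)
  filter_upwards [h1, h2] with k h1 h2 i hi
  have h3 := h1 i hi
  push_cast at h2
  nlinarith [mul_le_mul_of_nonneg_left h2 (sq_nonneg (m i))]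

set_option maxHeartbeats 1000000 in
lemma upper_det (hx : ∀ n, |x n| ≤ m n)
    (hV : Tendsto (fun n => Real.sqrt (∑ i ∈ Finset.range n, x i ^ 2)) atTop atTop)
    (hm : Tendsto (fun n => m n / (Real.sqrt (∑ i ∈ Finset.range (n + 1), x i ^ 2) /
      Real.sqrt (ell (∑ i ∈ Finset.range (n + 1), x i ^ 2)))) atTop (nhds 0))
    {δ : ℝ} (hδ0 : 0 < δ) (l : ℕ → ℝ)
    (hl : ∀ k, l k = Real.sqrt (2 * Real.log k / (1 + δ) ^ k))
    (hev : ∀ᶠ k : ℕ in atTop, ∀ n, (∀ i < n, l k * m i ≤ δ / 4) →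
      l k * (∑ i ∈ Finset.range n, x i) - (1 + δ) / 2 * (l k) ^ 2 * (∑ i ∈ Finset.range n, x i ^ 2)
        ≤ (1 + δ) * Real.log k) :
    ∀ᶠ n in atTop, ∑ i ∈ Finset.range n, x i ≤ Real.sqrt 2 * (1 + δ) ^ 3 *
      (Real.sqrt (∑ i ∈ Finset.range n, x i ^ 2) *
        Real.sqrt (ell (∑ i ∈ Finset.range n, x i ^ 2))) := by
  set R := 1 + δ with hRd
  have hR : 1 < R := by linarith
  have hm0 : ∀ n, 0 ≤ m n := fun n => (abs_nonneg _).trans (hx n)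
  have hreg := reg2 hx hV hm (show 0 < (δ / 4) ^ 2 / R by positivity) hR
  obtain ⟨K, hK⟩ := eventually_atTop.1 (hev.and (hreg.and ((log_le_ell hR hδ0).and
    (eventually_ge_atTop 2))))
  filter_upwards [(Q_tendsto hV).eventually_ge_atTop (R ^ (K + 1))] with n hn
  set Q := ∑ i ∈ Finset.range n, x i ^ 2 with hQ
  set S := ∑ i ∈ Finset.range n, x i with hS
  obtain ⟨k, hk1, hk2⟩ := exists_nat_pow_near ((one_le_pow₀ hR.le).trans hn) hR
  have hKk : K ≤ k := by
    by_contra h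
    have : R ^ (k + 1) ≤ R ^ (K + 1) := pow_le_pow_right₀ hR.le (by omega)
    linarith
  obtain ⟨h1, h2, h3, hk2'⟩ := hK k hKk
  have hk2r : (2 : ℝ) ≤ k := by exact_mod_cast hk2'
  set g := Real.log k with hg
  have hg0 : 0 < g := Real.log_pos (by linarith)
  set T := R ^ k with hT
  have hT0 : 0 < T := by positivity
  have hT1 : 1 < T := one_lt_pow₀ hR (by omega)
  have hlsq : l k ^ 2 = 2 * g / T := by
    rw [hl, Real.sq_sqrt (by positivity)]
  have hl0 : 0 < l k := by rw [hl]; exact Real.sqrt_pos.2 (by positivity)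
  have htr : ∀ i < n, l k * m i ≤ δ / 4 := by
    intro i hi
    have h4 := h2 i ((Q_mono hi.le).trans hk2.le)
    have h5 : g ≤ Real.log ((k : ℝ) + 1) := Real.log_le_log (by linarith) (by linarith)
    have h6 : R ^ (k + 1) = T * R := pow_succ _ _
    rw [h6] at h4
    have h7 : (δ / 4) ^ 2 / R * (T * R) = (δ / 4) ^ 2 * T := by field_simp
    rw [h7] at h4
    have h8 : (l k * m i) ^ 2 ≤ (δ / 4) ^ 2 := by
      rw [mul_pow, hlsq, div_mul_eq_mul_div, div_le_iff₀ hT0]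
      linarith [mul_le_mul_of_nonneg_right h5 (sq_nonneg (m i))]
    exact le_of_sq_le_sq h8 (by positivity)
  have hmain := h1 n htr
  set a := Real.sqrt g with ha
  set t := Real.sqrt T with ht
  set v := Real.sqrt Q with hv
  set w := Real.sqrt 2 with hw
  have hQ0 : 0 < Q := by linarith
  have ha2 : a ^ 2 = g := Real.sq_sqrt hg0.le
  have ht2 : t ^ 2 = T := Real.sq_sqrt hT0.le
  have hv2 : v ^ 2 = Q := Real.sq_sqrt hQ0.le
  have hw2 : w ^ 2 = 2 := Real.sq_sqrt (by norm_num)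
  have ha0 : 0 < a := Real.sqrt_pos.2 hg0
  have ht0 : 0 < t := Real.sqrt_pos.2 hT0
  have hv0 : 0 < v := Real.sqrt_pos.2 hQ0
  have hw0 : 0 < w := Real.sqrt_pos.2 (by norm_num)
  have hlk : l k = w * a / t := by
    rw [hl, Real.sqrt_div (by positivity), Real.sqrt_mul (by norm_num)]
  have htv : t ≤ v := Real.sqrt_le_sqrt hk1
  have hvt : v ≤ R * t := by
    refine le_of_sq_le_sq ?_ (by positivity)
    rw [mul_pow, hv2, ht2]
    rw [pow_succ] at hk2
    have := mul_le_mul_of_nonneg_left hR.le (show 0 ≤ R * T by positivity)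
    linarith
  have hS1 : S * w ≤ R * a * (t + v * R) := by
    have e1 : w * a / t * S - R / 2 * (w * a / t) ^ 2 * v ^ 2 ≤ R * a ^ 2 := by
      rw [← hlk, hv2, ha2]; exact hmain
    have e2 : w * a / t * S ≤ R * a ^ 2 + R * a ^ 2 * v ^ 2 / t ^ 2 := by
      have : R / 2 * (w * a / t) ^ 2 * v ^ 2 = R * a ^ 2 * v ^ 2 / t ^ 2 := by
        rw [div_pow, mul_pow, hw2]; field_simp
      linarith
    have e3 : R * a ^ 2 + R * a ^ 2 * v ^ 2 / t ^ 2 ≤ R * a ^ 2 + R * a ^ 2 * (v * R) / t := by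
      have : R * a ^ 2 * v ^ 2 / t ^ 2 ≤ R * a ^ 2 * (v * R) / t := by
        rw [div_le_div_iff₀ (by positivity) ht0]
        have : R * a ^ 2 * v * t * v ≤ R * a ^ 2 * v * t * (R * t) :=
          mul_le_mul_of_nonneg_left hvt (by positivity)
        linarith
      linarith
    have e4 := e2.trans e3
    have e5 : a / t * (S * w) ≤ a / t * (R * a * (t + v * R)) := by
      calc a / t * (S * w) = w * a / t * S := by ring
        _ ≤ _ := e4
        _ = a / t * (R * a * (t + v * R)) := by field_simp
    exact le_of_mul_le_mul_left e5 (by positivity)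
  have hell0 : 0 < ell Q := by
    have : ell T ≤ ell Q := ell_mono hT1 hk1
    have : 0 < ell T := by
      by_contra h; push Not at h
      have := mul_nonpos_of_nonneg_of_nonpos (show 0 ≤ R by linarith) h
      linarith
    linarith
  set p := Real.sqrt (ell Q) with hp
  have hp0 : 0 < p := Real.sqrt_pos.2 hell0
  have hap : a ≤ R * p := by
    refine le_of_sq_le_sq ?_ (by positivity)
    rw [mul_pow, ha2, hp, Real.sq_sqrt hell0.le]
    have : ell T ≤ ell Q := ell_mono hT1 hk1
    have h9 : g ≤ R * ell Q := h3.trans (mul_le_mul_of_nonneg_left this (by linarith))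
    linarith [mul_le_mul_of_nonneg_left hR.le (mul_pos (show 0 < R by linarith) hell0).le]
  have hS2 : S * w ≤ (w * R ^ 3 * (v * p)) * w := by
    have e0 : (w * R ^ 3 * (v * p)) * w = 2 * R ^ 3 * (v * p) := by rw [← hw2]; ring
    rw [e0]
    calc S * w ≤ R * a * (t + v * R) := hS1
      _ ≤ R * (R * p) * (R * v + v * R) := by
        gcongr
        linarith [mul_le_mul_of_nonneg_right hR.le hv0.le]
      _ = 2 * R ^ 3 * (v * p) := by ring
  exact le_of_mul_le_mul_right hS2 hw0

set_option maxHeartbeats 1000000 in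
lemma lower_det (hx : ∀ n, |x n| ≤ m n)
    (hV : Tendsto (fun n => Real.sqrt (∑ i ∈ Finset.range n, x i ^ 2)) atTop atTop)
    (hm : Tendsto (fun n => m n / (Real.sqrt (∑ i ∈ Finset.range (n + 1), x i ^ 2) /
      Real.sqrt (ell (∑ i ∈ Finset.range (n + 1), x i ^ 2)))) atTop (nhds 0))
    (hup : ∀ᶠ n in atTop, -(∑ i ∈ Finset.range n, x i) ≤ 2 *
      (Real.sqrt (∑ i ∈ Finset.range n, x i ^ 2) *
        Real.sqrt (ell (∑ i ∈ Finset.range n, x i ^ 2))))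
    {ε R : ℝ} (hε0 : 0 < ε) (hε : ε ≤ 1 / 4) (hR : R = 1 / ε ^ 2)
    (hfr : ∃ᶠ k : ℕ in atTop, ∀ n1 n2 : ℕ, n1 ≤ n2 →
      (∀ i, ∑ j ∈ Finset.range i, x j ^ 2 < R ^ (k + 1) → lam ε R k * m i ≤ ε ^ 2 / 128) →
      (∀ i, i < n1 ↔ ∑ j ∈ Finset.range i, x j ^ 2 < R ^ k) →
      (∀ i, i < n2 ↔ ∑ j ∈ Finset.range i, x j ^ 2 < R ^ (k + 1)) →
      0 < Lf ε (lam ε R k * (∑ i ∈ Finset.range n2, x i - ∑ i ∈ Finset.range n1, x i))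
        ((lam ε R k) ^ 2 * (∑ i ∈ Finset.range n2, x i ^ 2 - ∑ i ∈ Finset.range n1, x i ^ 2))) :
    ∃ᶠ n in atTop, Real.sqrt 2 * (1 - 7 * ε) *
      (Real.sqrt (∑ i ∈ Finset.range n, x i ^ 2) *
        Real.sqrt (ell (∑ i ∈ Finset.range n, x i ^ 2))) ≤ ∑ i ∈ Finset.range n, x i := by
  have hεε : ε * ε ≤ ε * (1 / 4) := mul_le_mul_of_nonneg_left hε hε0.le
  have hε3 : ε ^ 2 * ε ≤ ε ^ 2 * (1 / 4) := mul_le_mul_of_nonneg_left hε (sq_nonneg ε)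
  have hε2 : ε ^ 2 ≤ 1 / 16 := by linarith
  have hR1 : 16 ≤ R := by
    rw [hR, le_div_iff₀ (by positivity)]; nlinarith
  have hR1' : 1 < R := by linarith
  have hεR : ε ^ 2 * R = 1 := by rw [hR]; field_simp
  have hm0 : ∀ n, 0 ≤ m n := fun n => (abs_nonneg _).trans (hx n)
  set Q : ℕ → ℝ := fun n => ∑ i ∈ Finset.range n, x i ^ 2 with hQd
  set S : ℕ → ℝ := fun n => ∑ i ∈ Finset.range n, x i with hSd
  have hQt : Tendsto Q atTop atTop := Q_tendsto hV
  have hQm : Monotone Q := fun a b h => Q_mono h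
  have hsplit : ∀ c : ℝ, ∃ n, ∀ i, i < n ↔ Q i < c := by
    intro c
    have hex : ∃ n, c ≤ Q n := (hQt.eventually_ge_atTop c).exists
    classical
    refine ⟨Nat.find hex, fun i => ⟨fun h => ?_, fun h => ?_⟩⟩
    · exact not_le.1 (Nat.find_min hex h)
    · by_contra h2
      push Not at h2
      have := (Nat.find_spec hex).trans (hQm h2)
      linarith
  have hreg := reg2 hx hV hm (show 0 < (ε ^ 2 / 128) ^ 2 by positivity) hR1'
  obtain ⟨N0, hN0⟩ := eventually_atTop.1 hup
  rw [frequently_atTop]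
  intro N
  have hpow : Tendsto (fun k : ℕ => R ^ k) atTop atTop := tendsto_pow_atTop_atTop_of_one_lt hR1'
  obtain ⟨k, hk, h1, h2, h3, h4⟩ := (hfr.and_eventually (hreg.and ((ell_le_log hR1' hε0).and
    ((tendsto_log_nat1.eventually_ge_atTop (1 + 8 * Real.log 4 / ε ^ 2)).and
    (hpow.eventually_gt_atTop (max 1 (Q (max N N0)))))))).exists
  obtain ⟨n1, hn1⟩ := hsplit (R ^ k)
  obtain ⟨n2, hn2⟩ := hsplit (R ^ (k + 1))
  have hRk : 0 < R ^ k := by positivity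
  have hRk1 : R ^ (k + 1) = R ^ k * R := pow_succ _ _
  have hRkle : R ^ k ≤ R ^ (k + 1) := pow_le_pow_right₀ hR1'.le (by omega)
  have hRkone : 1 < R ^ k := (le_max_left _ _).trans_lt h4
  have hNn1 : max N N0 < n1 := (hn1 _).2 ((le_max_right _ _).trans_lt h4)
  have hn12 : n1 ≤ n2 := by
    by_contra h
    push Not at h
    have := (hn1 n2).1 h
    exact absurd ((hn2 n2).2 (this.trans_le hRkle)) (lt_irrefl _)
  have hQn1 : R ^ k ≤ Q n1 := not_lt.1 fun h => lt_irrefl _ ((hn1 n1).2 h)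
  have hQn2 : R ^ (k + 1) ≤ Q n2 := not_lt.1 fun h => lt_irrefl _ ((hn2 n2).2 h)
  set g := Real.log ((k : ℝ) + 1) with hg
  have hlog4 : 0 < Real.log 4 := Real.log_pos (by norm_num)
  have hg1 : 1 ≤ g := by
    have : 0 ≤ 8 * Real.log 4 / ε ^ 2 := by positivity
    linarith
  have hgε : 8 * Real.log 4 ≤ ε ^ 2 * g := by
    have : 8 * Real.log 4 / ε ^ 2 ≤ g := by linarith
    rw [div_le_iff₀ (by positivity)] at this
    linarith
  have hmle : ∀ i, Q i < R ^ (k + 1) → m i ^ 2 ≤ R ^ k := by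
    intro i hi
    have e1 := h1 i hi.le
    have e2 : m i ^ 2 ≤ (ε ^ 2 / 128) ^ 2 * R ^ (k + 1) := by
      linarith [sq_nonneg (m i), mul_le_mul_of_nonneg_right hg1 (sq_nonneg (m i))]
    refine e2.trans ?_
    rw [hRk1]
    have e3 : (ε ^ 2 / 128) ^ 2 * (R ^ k * R) = (ε ^ 2 * R) * ε ^ 2 * R ^ k / 16384 := by ring
    rw [e3, hεR]
    linarith [mul_le_mul_of_nonneg_right (show ε ^ 2 ≤ 1 by linarith) hRk.le]
  have hover : ∀ n c, R ^ k ≤ c → c ≤ R ^ (k + 1) → (∀ i, i < n ↔ Q i < c) →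
      Q n ≤ c + R ^ k := by
    intro n c hc1 hc2 hn
    have hn0 : 0 < n := (hn 0).2 (by simp [hQd]; linarith)
    obtain ⟨j, rfl⟩ : ∃ j, n = j + 1 := ⟨n - 1, by omega⟩
    have e1 : Q j < c := (hn j).1 (by omega)
    have e2 : Q (j + 1) = Q j + x j ^ 2 := Finset.sum_range_succ _ _
    have e3 : x j ^ 2 ≤ m j ^ 2 := by
      rw [← sq_abs]; exact pow_le_pow_left₀ (abs_nonneg _) (hx j) 2
    have e4 := hmle j (e1.trans_le hc2)
    linarith
  have hQ1u : Q n1 ≤ 2 * R ^ k := by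
    have := hover n1 (R ^ k) le_rfl hRkle hn1
    linarith
  have hQ2u : Q n2 ≤ 2 * R ^ (k + 1) := by
    have := hover n2 (R ^ (k + 1)) hRkle le_rfl hn2
    linarith
  set lk := lam ε R k with hlk
  have hlsq : lk ^ 2 = 2 * g / ((1 + 4 * ε) * R ^ (k + 1)) := by
    rw [hlk, lam, Real.sq_sqrt (by positivity)]
  have hT0 : 0 < R ^ (k + 1) := by positivity
  have hlk0 : 0 < lk := Real.sqrt_pos.2 (by positivity)
  have hL := hk n1 n2 hn12 (by
    intro i hi
    have e1 := h1 i hi.le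
    have e2 : (lk * m i) ^ 2 ≤ (ε ^ 2 / 128) ^ 2 := by
      rw [mul_pow, hlsq, div_mul_eq_mul_div, div_le_iff₀ (by positivity)]
      refine e1.trans ?_
      refine mul_le_mul_of_nonneg_left ?_ (by positivity)
      linarith [mul_pos hε0 hT0]
    exact le_of_sq_le_sq e2 (by positivity)) hn1 hn2
  set T := R ^ (k + 1) with hT
  have hTk : R ^ k = ε ^ 2 * T := by
    rw [hRk1]; linear_combination (-(R ^ k)) * hεR
  rw [hTk] at hQ1u hQn1
  -- q lower bound
  have hq : (1 - 2 * ε ^ 2) * Q n2 ≤ Q n2 - Q n1 := by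
    linarith [mul_le_mul_of_nonneg_left hQn2 (sq_nonneg ε)]
  have hq' : (1 - 2 * ε ^ 2) * T ≤ Q n2 - Q n1 :=
    le_trans (mul_le_mul_of_nonneg_left hQn2 (by linarith)) hq
  have hu : 4 * Real.log 4 ≤ ε ^ 2 * (lk ^ 2 * (Q n2 - Q n1)) := by
    have e1 : g / 2 ≤ lk ^ 2 * ((1 - 2 * ε ^ 2) * T) := by
      have : lk ^ 2 * ((1 - 2 * ε ^ 2) * T) = 2 * g * (1 - 2 * ε ^ 2) / (1 + 4 * ε) := by
        rw [hlsq]; field_simp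
      rw [this, le_div_iff₀ (by positivity)]
      have e3 : (1 + 4 * ε) / 2 ≤ 2 * (1 - 2 * ε ^ 2) := by linarith
      linarith [mul_le_mul_of_nonneg_left e3 (show 0 ≤ g by linarith)]
    have e2 := mul_le_mul_of_nonneg_left hq' (sq_nonneg lk)
    have e3 := mul_le_mul_of_nonneg_left (e1.trans e2) (sq_nonneg ε)
    linarith
  have hd := Lf_pos hε0 hε hu hL
  have hD : (1 - ε) * (lk * (Q n2 - Q n1)) < S n2 - S n1 := by
    have : lk * ((1 - ε) * (lk * (Q n2 - Q n1))) < lk * (S n2 - S n1) := by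
      have e : lk * ((1 - ε) * (lk * (Q n2 - Q n1))) = (1 - ε) * (lk ^ 2 * (Q n2 - Q n1)) := by
        ring
      rw [e]; exact hd
    exact lt_of_mul_lt_mul_left this hlk0.le
  refine ⟨n2, (le_max_left N N0).trans (hNn1.le.trans hn12), ?_⟩
  have hS1 := hN0 n1 ((le_max_right N N0).trans hNn1.le)
  change -(S n1) ≤ 2 * (Real.sqrt (Q n1) * Real.sqrt (ell (Q n1))) at hS1
  change Real.sqrt 2 * (1 - 7 * ε) * (Real.sqrt (Q n2) * Real.sqrt (ell (Q n2))) ≤ S n2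
  have hg0 : 0 < g := by linarith
  have hQ20 : 0 < Q n2 := by linarith
  have hQ1one : 1 < Q n1 := by rw [← hTk] at hQn1; linarith
  set a := Real.sqrt g with ha
  set t := Real.sqrt T with ht
  set v := Real.sqrt (Q n2) with hv
  set w := Real.sqrt 2 with hw
  set p := Real.sqrt (ell (Q n2)) with hp
  have ha2 : a ^ 2 = g := Real.sq_sqrt hg0.le
  have ht2 : t ^ 2 = T := Real.sq_sqrt hT0.le
  have hv2 : v ^ 2 = Q n2 := Real.sq_sqrt hQ20.le
  have hw2 : w ^ 2 = 2 := Real.sq_sqrt (by norm_num)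
  have ha0 : 0 < a := Real.sqrt_pos.2 hg0
  have ht0 : 0 < t := Real.sqrt_pos.2 hT0
  have hv0 : 0 < v := Real.sqrt_pos.2 hQ20
  have hw0 : 0 < w := Real.sqrt_pos.2 (by norm_num)
  have hp0 : 0 ≤ p := Real.sqrt_nonneg _
  have htv : t ≤ v := Real.sqrt_le_sqrt hQn2
  have hlk' : (1 - 2 * ε) * (w * a / t) ≤ lk := by
    refine le_of_sq_le_sq ?_ hlk0.le
    rw [hlsq, mul_pow, div_pow, mul_pow, hw2, ha2, ht2, mul_div_assoc', 
      div_le_div_iff₀ hT0 (by positivity)]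
    have e1 : (1 - 2 * ε) ^ 2 * (1 + 4 * ε) ≤ 1 := by linarith [sq_nonneg ε]
    have e2 := mul_le_mul_of_nonneg_right e1 (show 0 ≤ 2 * g * T by positivity)
    linarith
  have hpa : (1 - ε) * p ≤ a := by
    have hpb : p ≤ (1 + ε) * a := by
      refine Real.sqrt_le_iff.2 ⟨by positivity, ?_⟩
      rw [mul_pow, ha2]
      have e1 : ell (Q n2) ≤ ell (2 * T) := ell_mono (hQ1one.trans_le (hQm hn12)) hQ2u
      have e2 : (1 + ε) * g ≤ (1 + ε) ^ 2 * g := by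
        refine mul_le_mul_of_nonneg_right ?_ hg0.le
        linarith [sq_nonneg ε]
      linarith
    linarith [mul_le_mul_of_nonneg_left hpb (show 0 ≤ 1 - ε by linarith),
      mul_nonneg (sq_nonneg ε) ha0.le]
  have hD2 : w * (1 - 5 * ε) * (v * p) ≤ S n2 - S n1 := by
    refine le_trans ?_ hD.le
    have c1 : 0 ≤ 1 - ε := by linarith
    have c2 : 0 ≤ 1 - 2 * ε := by linarith
    have c3 : 0 ≤ 1 - 2 * ε ^ 2 := by linarith
    have e1 : lk * ((1 - 2 * ε ^ 2) * v ^ 2) ≤ lk * (Q n2 - Q n1) := by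
      rw [hv2]; exact mul_le_mul_of_nonneg_left hq hlk0.le
    have e2 : (1 - 2 * ε) * (w * a / t) * ((1 - 2 * ε ^ 2) * v ^ 2) ≤
        lk * ((1 - 2 * ε ^ 2) * v ^ 2) := mul_le_mul_of_nonneg_right hlk' (by positivity)
    have e3 : a * v ≤ a / t * v ^ 2 := by
      rw [div_mul_eq_mul_div, le_div_iff₀ ht0]
      linarith [mul_le_mul_of_nonneg_left htv (show 0 ≤ a * v by positivity)]
    have e4 : (1 - ε) * p * v ≤ a * v := mul_le_mul_of_nonneg_right hpa hv0.le
    have e5 : (1 - 2 * ε) * (1 - 2 * ε ^ 2) * w * ((1 - ε) * p * v) ≤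
        (1 - 2 * ε) * (1 - 2 * ε ^ 2) * w * (a / t * v ^ 2) :=
      mul_le_mul_of_nonneg_left (e4.trans e3) (by positivity)
    have e6 : (1 - 2 * ε) * (1 - 2 * ε ^ 2) * w * ((1 - ε) * p * v) ≤ lk * (Q n2 - Q n1) := by
      refine le_trans e5 (le_trans (le_of_eq ?_) (e2.trans e1))
      ring
    have e7 := mul_le_mul_of_nonneg_left e6 c1
    refine le_trans ?_ e7
    have e8 : 1 - 5 * ε ≤ (1 - ε) * ((1 - 2 * ε) * (1 - 2 * ε ^ 2) * (1 - ε)) := by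
      have f1 : 1 - 4 * ε ≤ (1 - ε) * ((1 - 2 * ε) * (1 - ε)) := by
        linarith [sq_nonneg ε]
      have f2 : (1 - ε) * ((1 - 2 * ε) * (1 - ε)) ≤ 1 := by
        linarith [pow_pos hε0 3]
      linarith [sq_nonneg ε, mul_le_mul_of_nonneg_right f2 (sq_nonneg ε)]
    have e9 := mul_le_mul_of_nonneg_right e8 (show 0 ≤ w * (v * p) by positivity)
    linarith
  have hS1' : -(S n1) ≤ w * (2 * ε) * (v * p) := by
    refine hS1.trans ?_
    have e1 : Real.sqrt (Q n1) ≤ w * ε * v := by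
      refine Real.sqrt_le_iff.2 ⟨by positivity, ?_⟩
      rw [mul_pow, mul_pow, hw2, hv2]
      linarith [mul_le_mul_of_nonneg_left hQn2 (sq_nonneg ε)]
    have e2 : Real.sqrt (ell (Q n1)) ≤ p := Real.sqrt_le_sqrt (ell_mono hQ1one (hQm hn12))
    have e3 := mul_le_mul e1 e2 (Real.sqrt_nonneg _) (by positivity)
    linarith
  linarith

end det

section as
variable {Ω : Type*} {mΩ : MeasurableSpace Ω} {μ : Measure Ω}
    [IsProbabilityMeasure μ] {ℱ : Filtration ℕ mΩ} {X M : ℕ → Ω → ℝ}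

lemma upper_as (hX : ∀ n, StronglyMeasurable[ℱ (n + 1)] (X n))
    (hint : ∀ n, Integrable (X n) μ) (hcond : ∀ n, μ[X n | ℱ n] =ᵐ[μ] 0)
    (hM : ∀ n, StronglyMeasurable[ℱ n] (M n)) (hbd : ∀ᵐ ω ∂μ, ∀ n, |X n ω| ≤ M n ω)
    (hV : ∀ᵐ ω ∂μ, Tendsto (fun n => Real.sqrt (∑ i ∈ Finset.range n, X i ω ^ 2)) atTop atTop)
    (hm : ∀ᵐ ω ∂μ, Tendsto (fun n => M n ω / (Real.sqrt (∑ i ∈ Finset.range (n + 1), X i ω ^ 2) /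
      Real.sqrt (ell (∑ i ∈ Finset.range (n + 1), X i ω ^ 2)))) atTop (nhds 0))
    {δ : ℝ} (hδ0 : 0 < δ) (hδ : δ ≤ 1) :
    ∀ᵐ ω ∂μ, ∀ᶠ n in atTop, ∑ i ∈ Finset.range n, X i ω ≤ Real.sqrt 2 * (1 + δ) ^ 3 *
      (Real.sqrt (∑ i ∈ Finset.range n, X i ω ^ 2) *
        Real.sqrt (ell (∑ i ∈ Finset.range n, X i ω ^ 2))) := by
  filter_upwards [hbd, hV, hm, upper_prob hX hint hcond hM hbd hδ0 hδ
    (fun k => Real.sqrt (2 * Real.log k / (1 + δ) ^ k)) (fun k => Real.sqrt_nonneg _)]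
    with ω h1 h2 h3 h4
  refine upper_det (x := fun i => X i ω) (m := fun i => M i ω) h1 h2 h3 hδ0 _ (fun k => rfl) ?_
  filter_upwards [h4] with k hk n hn
  have hk := hk n
  have e : ∀ i ∈ Finset.range n, Set.indicator
      {ω | Real.sqrt (2 * Real.log k / (1 + δ) ^ k) * M i ω ≤ δ / 4} (X i) ω = X i ω :=
    fun i hi => Set.indicator_of_mem
      (show ω ∈ {ω | Real.sqrt (2 * Real.log k / (1 + δ) ^ k) * M i ω ≤ δ / 4} from
        hn i (Finset.mem_range.1 hi)) _
  have e1 : Dn (fun i => {ω | Real.sqrt (2 * Real.log k / (1 + δ) ^ k) * M i ω ≤ δ / 4}) X n ω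
      = ∑ i ∈ Finset.range n, X i ω := Finset.sum_congr rfl e
  have e2 : qn (fun i => {ω | Real.sqrt (2 * Real.log k / (1 + δ) ^ k) * M i ω ≤ δ / 4}) X n ω
      = ∑ i ∈ Finset.range n, X i ω ^ 2 :=
    Finset.sum_congr rfl fun i hi => congrArg (· ^ 2) (e i hi)
  rw [e1, e2] at hk
  exact hk

lemma ind_sum {f g : ℕ → ℝ} {n1 n2 n : ℕ} (h12 : n1 ≤ n2) (h : n2 ≤ n)
    (h1 : ∀ i, n1 ≤ i → i < n2 → f i = g i) (h2 : ∀ i, ¬ (n1 ≤ i ∧ i < n2) → f i = 0) :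
    ∑ i ∈ Finset.range n, f i = ∑ i ∈ Finset.range n2, g i - ∑ i ∈ Finset.range n1, g i := by
  rw [← Finset.sum_Ico_eq_sub _ h12]
  have : ∑ i ∈ Finset.Ico n1 n2, g i = ∑ i ∈ Finset.Ico n1 n2, f i :=
    Finset.sum_congr rfl fun i hi => (h1 i (Finset.mem_Ico.1 hi).1 (Finset.mem_Ico.1 hi).2).symm
  rw [this]
  symm
  refine Finset.sum_subset ?_ ?_
  · intro i hi
    rw [Finset.mem_Ico] at hi
    exact Finset.mem_range.2 (by omega)
  · intro i _ hi
    exact h2 i (fun h => hi (Finset.mem_Ico.2 h))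

lemma lower_as (hX : ∀ n, StronglyMeasurable[ℱ (n + 1)] (X n))
    (hint : ∀ n, Integrable (X n) μ) (hcond : ∀ n, μ[X n | ℱ n] =ᵐ[μ] 0)
    (hM : ∀ n, StronglyMeasurable[ℱ n] (M n)) (hbd : ∀ᵐ ω ∂μ, ∀ n, |X n ω| ≤ M n ω)
    (hV : ∀ᵐ ω ∂μ, Tendsto (fun n => Real.sqrt (∑ i ∈ Finset.range n, X i ω ^ 2)) atTop atTop)
    (hm : ∀ᵐ ω ∂μ, Tendsto (fun n => M n ω / (Real.sqrt (∑ i ∈ Finset.range (n + 1), X i ω ^ 2) /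
      Real.sqrt (ell (∑ i ∈ Finset.range (n + 1), X i ω ^ 2)))) atTop (nhds 0))
    {ε : ℝ} (hε0 : 0 < ε) (hε : ε ≤ 1 / 4) :
    ∀ᵐ ω ∂μ, ∃ᶠ n in atTop, Real.sqrt 2 * (1 - 7 * ε) *
      (Real.sqrt (∑ i ∈ Finset.range n, X i ω ^ 2) *
        Real.sqrt (ell (∑ i ∈ Finset.range n, X i ω ^ 2))) ≤ ∑ i ∈ Finset.range n, X i ω := by
  have hneg := upper_as (X := fun n => -X n) (M := M) (μ := μ) (ℱ := ℱ) (δ := 1 / 10)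
    (fun n => (hX n).neg) (fun n => (hint n).neg)
    (fun n => by
      refine (condExp_neg (X n) (ℱ n)).trans ?_
      filter_upwards [hcond n] with ω h
      simp [h]) hM
    (by simpa using hbd) (by simpa using hV) (by simpa using hm) (by norm_num) (by norm_num)
  have hR : 1 < 1 / ε ^ 2 := by
    rw [lt_div_iff₀ (by positivity)]; nlinarith
  filter_upwards [hbd, hV, hm, hneg, lower_prob hX hint hcond hM hbd hε0 hε hR]
    with ω h1 h2 h3 h4 h5
  refine lower_det (x := fun i => X i ω) (m := fun i => M i ω) h1 h2 h3 ?_ hε0 hε rfl ?_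
  · filter_upwards [h4] with n hn
    simp only [Pi.neg_apply, neg_sq, Finset.sum_neg_distrib] at hn
    refine hn.trans (mul_le_mul_of_nonneg_right ?_ (by positivity))
    have : Real.sqrt 2 ≤ 1.5 := by
      rw [Real.sqrt_le_iff]; norm_num
    norm_num at this ⊢
    linarith
  · refine h5.mono fun k hk n1 n2 h12 htr hn1 hn2 => ?_
    obtain ⟨n, hn, hn'⟩ := (hk.and_eventually (eventually_ge_atTop n2)).exists
    have g1 : ∀ i, n1 ≤ i → i < n2 → (Ablk X M ε (1 / ε ^ 2) k i).indicator (X i) ω = X i ω := by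
      intro i hi1 hi2
      have hmem : ω ∈ Ablk X M ε (1 / ε ^ 2) k i := by
        refine ⟨htr i ((hn2 i).1 hi2), ?_, (hn2 i).1 hi2⟩
        exact not_lt.1 fun h => absurd ((hn1 i).2 h) (by omega)
      exact Set.indicator_of_mem hmem _
    have g2 : ∀ i, ¬ (n1 ≤ i ∧ i < n2) →
        (Ablk X M ε (1 / ε ^ 2) k i).indicator (X i) ω = 0 := by
      intro i hi
      refine Set.indicator_of_notMem (fun h => hi ⟨?_, (hn2 i).2 h.2.2⟩) _
      exact not_lt.1 fun h' => absurd ((hn1 i).1 h') (not_lt.2 h.2.1)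
    have e1 : Dn (Ablk X M ε (1 / ε ^ 2) k) X n ω =
        ∑ i ∈ Finset.range n2, X i ω - ∑ i ∈ Finset.range n1, X i ω :=
      ind_sum h12 hn' g1 g2
    have e2 : qn (Ablk X M ε (1 / ε ^ 2) k) X n ω =
        ∑ i ∈ Finset.range n2, X i ω ^ 2 - ∑ i ∈ Finset.range n1, X i ω ^ 2 :=
      ind_sum (f := fun i => ((Ablk X M ε (1 / ε ^ 2) k i).indicator (X i) ω) ^ 2)
        (g := fun i => X i ω ^ 2) h12 hn'
        (fun i a b => congrArg (· ^ 2) (g1 i a b))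
        (fun i a => by simp only [g2 i a]; norm_num)
    rw [e1, e2] at hn
    exact hn

end as

/-- deterministic conclusion for a ratio sequence -/
lemma limsup_eq {s b : ℕ → ℝ} (hb : ∀ᶠ n in atTop, 0 < b n)
    (hu : ∀ j : ℕ, ∀ᶠ n in atTop, s n ≤ Real.sqrt 2 * (1 + 1 / ((j : ℝ) + 1)) ^ 3 * b n)
    (hl : ∀ j : ℕ, ∃ᶠ n in atTop, Real.sqrt 2 * (1 - 7 * (1 / 4 * (1 / ((j : ℝ) + 1)))) * b n ≤ s n) :
    Filter.limsup (fun n => ((s n / b n : ℝ) : EReal)) atTop = ((Real.sqrt 2 : ℝ) : EReal) := by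
  have ht : Tendsto (fun j : ℕ => 1 / ((j : ℝ) + 1)) atTop (nhds 0) :=
    tendsto_one_div_add_atTop_nhds_zero_nat
  apply le_antisymm
  · have h1 : Tendsto (fun j : ℕ => ((Real.sqrt 2 * (1 + 1 / ((j : ℝ) + 1)) ^ 3 : ℝ) : EReal)) atTop
        (nhds ((Real.sqrt 2 : ℝ) : EReal)) := by
      refine (continuous_coe_real_ereal.tendsto _).comp ?_
      have h0 := ((ht.const_add 1).pow 3).const_mul (Real.sqrt 2)
      rw [add_zero, one_pow, mul_one] at h0
      exact h0
    refine ge_of_tendsto' h1 fun j => ?_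
    refine limsup_le_of_le (h := ?_)
    filter_upwards [hb, hu j] with n h2 h3
    exact EReal.coe_le_coe_iff.2 ((div_le_iff₀ h2).2 h3)
  · have h1 : Tendsto (fun j : ℕ =>
        ((Real.sqrt 2 * (1 - 7 * (1 / 4 * (1 / ((j : ℝ) + 1)))) : ℝ) : EReal)) atTop
        (nhds ((Real.sqrt 2 : ℝ) : EReal)) := by
      refine (continuous_coe_real_ereal.tendsto _).comp ?_
      have h0 := (((ht.const_mul (1 / 4)).const_mul 7).const_sub 1).const_mul (Real.sqrt 2)
      rw [mul_zero, mul_zero, sub_zero, mul_one] at h0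
      exact h0
    refine le_of_tendsto' h1 fun j => ?_
    refine le_limsup_of_frequently_le ?_
    refine ((hl j).and_eventually hb).mono fun n h => ?_
    exact EReal.coe_le_coe_iff.2 ((le_div_iff₀ h.2).2 h.1)

end LIL

/-- Theorem 6.1 (self-normalized LIL for martingales). -/
theorem stmt_19 {Ω : Type*} {mΩ : MeasurableSpace Ω} {μ : Measure Ω}
    [IsProbabilityMeasure μ] (ℱ : Filtration ℕ mΩ)
    (X M : ℕ → Ω → ℝ)
    (hX : ∀ n, StronglyMeasurable[ℱ (n + 1)] (X (n + 1)))
    (hint : ∀ n, Integrable (X (n + 1)) μ)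
    (hcond : ∀ n, μ[X (n + 1) | ℱ n] =ᵐ[μ] 0)
    (hMmeas : ∀ n, StronglyMeasurable[ℱ n] (M (n + 1)))
    (hbd : ∀ n, ∀ᵐ ω ∂μ, |X (n + 1) ω| ≤ M (n + 1) ω)
    (hV : ∀ᵐ ω ∂μ,
      Tendsto (fun n => Real.sqrt (∑ i ∈ Finset.range n, (X (i + 1) ω) ^ 2)) atTop atTop)
    (hMo : ∀ᵐ ω ∂μ,
      Tendsto (fun n => M (n + 1) ω /
          (Real.sqrt (∑ i ∈ Finset.range (n + 1), (X (i + 1) ω) ^ 2) /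
            Real.sqrt (Real.log (Real.log
              (Real.sqrt (∑ i ∈ Finset.range (n + 1), (X (i + 1) ω) ^ 2))))))
        atTop (nhds 0)) :
    ∀ᵐ ω ∂μ,
      Filter.limsup (fun n =>
          (((∑ i ∈ Finset.range n, X (i + 1) ω) /
            (Real.sqrt (∑ i ∈ Finset.range n, (X (i + 1) ω) ^ 2) *
              Real.sqrt (Real.log (Real.log
                (Real.sqrt (∑ i ∈ Finset.range n, (X (i + 1) ω) ^ 2)))))) : EReal))
        atTop = ((Real.sqrt 2 : ℝ) : EReal) := by
  have hbd' : ∀ᵐ ω ∂μ, ∀ n, |X (n + 1) ω| ≤ M (n + 1) ω := ae_all_iff.2 hbd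
  have hu := fun j : ℕ => LIL.upper_as (X := fun n => X (n + 1)) (M := fun n => M (n + 1))
    (δ := 1 / ((j : ℝ) + 1)) hX hint hcond hMmeas hbd' hV hMo (by positivity)
    (by rw [div_le_one (by positivity)]; linarith [Nat.cast_nonneg (α := ℝ) j])
  have hl := fun j : ℕ => LIL.lower_as (X := fun n => X (n + 1)) (M := fun n => M (n + 1))
    (ε := 1 / 4 * (1 / ((j : ℝ) + 1))) hX hint hcond hMmeas hbd' hV hMo (by positivity)
    (by
      have : 1 / ((j : ℝ) + 1) ≤ 1 := by
        rw [div_le_one (by positivity)]; linarith [Nat.cast_nonneg (α := ℝ) j]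
      linarith)
  filter_upwards [hV, ae_all_iff.2 hu, ae_all_iff.2 hl] with ω h1 h2 h3
  have hQ := LIL.Q_tendsto h1
  have hb : ∀ᶠ n in atTop, 0 < Real.sqrt (∑ i ∈ Finset.range n, (X (i + 1) ω) ^ 2) *
      Real.sqrt (LIL.ell (∑ i ∈ Finset.range n, (X (i + 1) ω) ^ 2)) := by
    filter_upwards [hQ.eventually_gt_atTop 0, (LIL.tendsto_ell.comp hQ).eventually_gt_atTop 0]
      with n a b
    exact mul_pos (Real.sqrt_pos.2 a) (Real.sqrt_pos.2 b)
  have key := LIL.limsup_eq hb h2 h3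
  rw [← key]
  congr 1
end
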